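/- arXiv:2208.04111 — 4 statements merged into one kernel-verified Lean document; each statement's English description precedes it below -/
import Mathlib

section
/- Let p = (log n)/n and let G(n,p) denote the binomial random graph on n labelled vertices in which every pair of vertices forms an edge independently with probability p. Then asymptotically almost surely there do not exist two disjoint vertex sets A and B with |A| = |B| = ω² such that at least ω⁴/2 edges of G(n,p) join A to B. -/
open Filter SimpleGraph MeasureTheory
open scoped Classical ENNReal

noncomputable section

/-- The Bernoulli measure on `Bool` with success probability `p`. -/
def bern (p : ℝ≥0∞) : Measure Bool :=
  p • Measure.dirac true + (1 - p) • Measure.dirac false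

/-- The binomial random graph `G(n, p)`: every edge of the complete graph on `Fin n` is
present independently with probability `p`; a sample is the indicator function of the
set of present edges. -/
def gnp (n : ℕ) (p : ℝ) : Measure (((completeGraph (Fin n)).edgeSet) → Bool) :=
  Measure.pi (fun _ => bern (ENNReal.ofReal p))

/-- The number of present edges joining `A` to `B` in the sample `f` of `G(n,p)`. -/
def edgesBetween {n : ℕ} (f : ((completeGraph (Fin n)).edgeSet) → Bool)
    (A B : Finset (Fin n)) : ℕ :=
  (Finset.univ.filter (fun e : ((completeGraph (Fin n)).edgeSet) =>
    f e = true ∧ ∃ a ∈ A, ∃ b ∈ B, (e : Sym2 (Fin n)) = s(a, b))).card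

lemma bern_prob {p : ℝ≥0∞} (hp : p ≤ 1) : IsProbabilityMeasure (bern p) := by
  constructor
  simp [bern, add_tsub_cancel_of_le hp]

lemma gnp_prob {n : ℕ} {p : ℝ} (hp : p ≤ 1) : IsProbabilityMeasure (gnp n p) := by
  have hp' : ENNReal.ofReal p ≤ 1 := by simpa using hp
  have := bern_prob hp'
  unfold gnp
  infer_instance

lemma gnp_all {n : ℕ} {p : ℝ} (hp : p ≤ 1)
    (S : Finset ((completeGraph (Fin n)).edgeSet)) :
    gnp n p {f | ∀ e ∈ S, f e = true} = ENNReal.ofReal p ^ S.card := by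
  have hp' : ENNReal.ofReal p ≤ 1 := by simpa using hp
  have := bern_prob hp'
  have h1 : {f : ((completeGraph (Fin n)).edgeSet) → Bool | ∀ e ∈ S, f e = true}
      = Set.pi Set.univ (fun e => if e ∈ S then {true} else Set.univ) := by
    ext f
    simp only [Set.mem_setOf_eq, Set.mem_pi, Set.mem_univ, true_imp_iff]
    refine forall_congr' fun e => ?_
    split_ifs with h <;> simp [h]
  rw [h1, gnp, Measure.pi_pi]
  have h2 : ∀ e : ((completeGraph (Fin n)).edgeSet),
      bern (ENNReal.ofReal p) (if e ∈ S then {true} else Set.univ)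
        = if e ∈ S then ENNReal.ofReal p else 1 := by
    intro e
    split_ifs with h
    · simp [bern]
    · exact measure_univ
  simp_rw [h2]
  rw [Finset.prod_ite_mem, Finset.univ_inter, Finset.prod_const]

def potEdges {n : ℕ} (A B : Finset (Fin n)) : Finset ((completeGraph (Fin n)).edgeSet) :=
  Finset.univ.filter (fun e => ∃ a ∈ A, ∃ b ∈ B, (e : Sym2 (Fin n)) = s(a, b))

lemma potEdges_card {n : ℕ} (A B : Finset (Fin n)) :
    (potEdges A B).card ≤ A.card * B.card := by
  rw [← Finset.card_product, ← Finset.card_map (Function.Embedding.subtype _)]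
  refine le_trans (Finset.card_le_card ?_)
    (Finset.card_image_le (s := A ×ˢ B) (f := fun x => s(x.1, x.2)))
  intro e he
  simp only [Finset.mem_map, potEdges, Finset.mem_filter, Finset.mem_univ, true_and] at he
  obtain ⟨e', ⟨a, ha, b, hb, h⟩, rfl⟩ := he
  exact Finset.mem_image.2 ⟨(a, b), Finset.mem_product.2 ⟨ha, hb⟩, h.symm⟩

lemma pair_bound {n : ℕ} {p : ℝ} (hp : p ≤ 1) (A B : Finset (Fin n)) (k m : ℕ)
    (hA : A.card = k) (hB : B.card = k) (hm : k * k ≤ 2 * m) :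
    gnp n p {f | m ≤ edgesBetween f A B} ≤ (4 * ENNReal.ofReal p) ^ m := by
  have hsub : {f : ((completeGraph (Fin n)).edgeSet) → Bool | m ≤ edgesBetween f A B} ⊆
      ⋃ S ∈ (potEdges A B).powersetCard m, {f | ∀ e ∈ S, f e = true} := by
    intro f hf
    obtain ⟨S, hS, hc⟩ := Finset.exists_subset_card_eq (Set.mem_setOf_eq ▸ hf)
    simp only [Set.mem_iUnion, Set.mem_setOf_eq, Finset.mem_powersetCard]
    refine ⟨S, ⟨fun e he => ?_, hc⟩, fun e he => ?_⟩
    · have := (Finset.mem_filter.1 (hS he)).2.2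
      exact Finset.mem_filter.2 ⟨Finset.mem_univ _, this⟩
    · exact (Finset.mem_filter.1 (hS he)).2.1
  refine (measure_mono hsub).trans ((measure_biUnion_finset_le _ _).trans ?_)
  have h1 : ∀ S ∈ (potEdges A B).powersetCard m,
      gnp n p {f | ∀ e ∈ S, f e = true} = ENNReal.ofReal p ^ m := by
    intro S hS
    rw [gnp_all hp, (Finset.mem_powersetCard.1 hS).2]
  rw [Finset.sum_congr rfl h1, Finset.sum_const, nsmul_eq_mul, Finset.card_powersetCard, mul_pow]
  gcongr
  have h2 : (potEdges A B).card.choose m ≤ 4 ^ m := by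
    refine (Nat.choose_le_two_pow _ _).trans ?_
    have := potEdges_card A B
    rw [hA, hB] at this
    calc 2 ^ (potEdges A B).card ≤ 2 ^ (2 * m) :=
          Nat.pow_le_pow_right (by norm_num) (this.trans hm)
      _ = 4 ^ m := by rw [pow_mul]; norm_num
  exact_mod_cast h2

lemma union_bound {n : ℕ} {p : ℝ} (hp : p ≤ 1) (k m : ℕ) (hm : k * k ≤ 2 * m) :
    gnp n p {f | ∃ A B : Finset (Fin n), A.card = k ∧ B.card = k ∧ m ≤ edgesBetween f A B}
      ≤ (n : ℝ≥0∞) ^ (2 * k) * (4 * ENNReal.ofReal p) ^ m := by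
  have hsub : {f : ((completeGraph (Fin n)).edgeSet) → Bool |
      ∃ A B : Finset (Fin n), A.card = k ∧ B.card = k ∧ m ≤ edgesBetween f A B} ⊆
      ⋃ P ∈ (Finset.univ : Finset (Fin n)).powersetCard k ×ˢ
        (Finset.univ : Finset (Fin n)).powersetCard k, {f | m ≤ edgesBetween f P.1 P.2} := by
    rintro f ⟨A, B, hA, hB, h⟩
    simp only [Set.mem_iUnion]
    refine ⟨(A, B), ?_, h⟩
    simp [Finset.mem_powersetCard, hA, hB]
  refine (measure_mono hsub).trans ((measure_biUnion_finset_le _ _).trans ?_)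
  refine (Finset.sum_le_card_nsmul _ _ ((4 * ENNReal.ofReal p) ^ m) ?_).trans ?_
  · rintro ⟨A, B⟩ hP
    simp only [Finset.mem_product, Finset.mem_powersetCard_univ] at hP
    exact pair_bound hp A B k m hP.1 hP.2 hm
  · rw [nsmul_eq_mul]
    gcongr
    rw [Finset.card_product, Finset.card_powersetCard, Finset.card_univ, Fintype.card_fin]
    have : n.choose k * n.choose k ≤ n ^ (2 * k) := by
      rw [two_mul, pow_add]
      exact Nat.mul_le_mul (Nat.choose_le_pow n k) (Nat.choose_le_pow n k)
    exact_mod_cast this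

lemma num_bound {n : ℕ} {p : ℝ} (hn : 1 ≤ n) (hp0 : 0 ≤ p) (hp : (4 * p) ^ 2 * n ≤ 1) (k m : ℕ)
    (hk : 12 ≤ k) (hm : k * k ≤ 2 * m) :
    (n : ℝ) ^ (2 * k) * (4 * p) ^ m ≤ 1 / n := by
  have hn' : (1 : ℝ) ≤ n := by exact_mod_cast hn
  have h4 : 4 * p ≤ 1 := by
    nlinarith [mul_nonneg (sq_nonneg (4 * p)) (sub_nonneg.2 hn')]
  have h6 : 2 * (3 * k) ≤ m := by nlinarith
  calc (n : ℝ) ^ (2 * k) * (4 * p) ^ m ≤ (n : ℝ) ^ (2 * k) * (4 * p) ^ (2 * (3 * k)) := by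
        gcongr ?_ * ?_
        exact pow_le_pow_of_le_one (by positivity) h4 h6
    _ ≤ (n : ℝ) ^ (2 * k) * (1 / n) ^ (3 * k) := by
        rw [pow_mul (4 * p)]
        gcongr
        rw [le_div_iff₀ (by positivity)]
        exact hp
    _ = (1 / n) ^ k := by
        rw [show 3 * k = 2 * k + k by ring, pow_add, ← mul_assoc, ← mul_pow]
        rw [mul_one_div_cancel (by positivity), one_pow, one_mul]
    _ ≤ (1 / n) ^ 1 := by
        apply pow_le_pow_of_le_one (by positivity) _ (by omega)
        rw [div_le_one (by positivity)]; exact hn'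
    _ = 1 / n := pow_one _

lemma p_small : ∀ᶠ n : ℕ in atTop, (4 * (Real.log n / n)) ^ 2 * n ≤ 1 := by
  have h := (isLittleO_log_rpow_atTop (r := 1 / 2) (by norm_num)).bound
    (show (0 : ℝ) < 1 / 4 by norm_num)
  have h' := tendsto_natCast_atTop_atTop (R := ℝ) |>.eventually h
  filter_upwards [h', eventually_ge_atTop 1] with n hn h1
  have hn' : (1 : ℝ) ≤ n := by exact_mod_cast h1
  have hl := Real.log_nonneg hn'
  rw [← Real.sqrt_eq_rpow, Real.norm_of_nonneg hl, Real.norm_of_nonneg (Real.sqrt_nonneg _)] at hn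
  have hs := Real.sq_sqrt (show (0 : ℝ) ≤ n by positivity)
  have : (4 * Real.log n) ^ 2 ≤ n := by
    refine le_trans (pow_le_pow_left₀ (by positivity) ?_ 2) hs.le
    linarith
  calc (4 * (Real.log n / n)) ^ 2 * n = (4 * Real.log n) ^ 2 / n := by
        field_simp
    _ ≤ 1 := by rw [div_le_one (by positivity)]; exact this

/-- for `p = log n / n`, a.a.s. there do not exist two disjoint vertex sets
`A`, `B` with `|A| = |B| = ω²` such that at least `ω⁴/2` edges of `G(n,p)` join `A`
to `B`. -/
theorem statement10 (ω : ℕ → ℕ) (hω : Tendsto ω atTop atTop)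
    (hω' : Tendsto (fun n : ℕ => Real.log (ω n) / Real.log (Real.log n)) atTop (nhds 0)) :
    Tendsto (fun n : ℕ =>
        gnp n (Real.log n / n)
          {f | ¬ ∃ A B : Finset (Fin n), Disjoint A B ∧
              A.card = ω n ^ 2 ∧ B.card = ω n ^ 2 ∧
              ((ω n : ℝ) ^ 4) / 2 ≤ (edgesBetween f A B : ℝ)})
      atTop (nhds 1) := by
  have key : ∀ᶠ n : ℕ in atTop, ENNReal.ofReal (1 - 1 / (n : ℝ)) ≤
      gnp n (Real.log n / n) {f | ¬ ∃ A B : Finset (Fin n), Disjoint A B ∧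
              A.card = ω n ^ 2 ∧ B.card = ω n ^ 2 ∧
              ((ω n : ℝ) ^ 4) / 2 ≤ (edgesBetween f A B : ℝ)} ∧
      gnp n (Real.log n / n) {f | ¬ ∃ A B : Finset (Fin n), Disjoint A B ∧
              A.card = ω n ^ 2 ∧ B.card = ω n ^ 2 ∧
              ((ω n : ℝ) ^ 4) / 2 ≤ (edgesBetween f A B : ℝ)} ≤ 1 := by
    filter_upwards [p_small, eventually_ge_atTop 1, hω.eventually_ge_atTop 12] with n hp hn hw
    have hn' : (1 : ℝ) ≤ n := by exact_mod_cast hn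
    have hp0 : 0 ≤ Real.log n / n := div_nonneg (Real.log_nonneg hn') (by positivity)
    have hp1 : Real.log n / n ≤ 1 := by
      nlinarith [mul_nonneg (sq_nonneg (4 * (Real.log n / n))) (sub_nonneg.2 hn')]
    have := gnp_prob (n := n) hp1
    refine ⟨?_, prob_le_one⟩
    set p := Real.log n / n
    have hm : ω n ^ 2 * ω n ^ 2 ≤ 2 * ((ω n ^ 4 + 1) / 2) := by
      have : ω n ^ 2 * ω n ^ 2 = ω n ^ 4 := by ring
      omega
    have hk : 12 ≤ ω n ^ 2 := by nlinarith
    have hb := union_bound (n := n) hp1 (ω n ^ 2) ((ω n ^ 4 + 1) / 2) hm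
    have hb2 := num_bound hn hp0 hp (ω n ^ 2) ((ω n ^ 4 + 1) / 2) hk hm
    have hb3 : (n : ℝ≥0∞) ^ (2 * ω n ^ 2) * (4 * ENNReal.ofReal p) ^ ((ω n ^ 4 + 1) / 2)
        ≤ ENNReal.ofReal (1 / n) := by
      refine le_trans (le_of_eq ?_) (ENNReal.ofReal_le_ofReal hb2)
      rw [ENNReal.ofReal_mul (by positivity), ENNReal.ofReal_pow (by positivity),
        ENNReal.ofReal_pow (by positivity), ENNReal.ofReal_mul (by norm_num),
        ENNReal.ofReal_natCast]
      norm_num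
    rw [← Set.compl_setOf, prob_compl_eq_one_sub (Set.toFinite _).measurableSet,
      ENNReal.ofReal_sub _ (by positivity), ENNReal.ofReal_one]
    refine tsub_le_tsub_left (le_trans (measure_mono ?_) (hb.trans hb3)) _
    rintro f ⟨A, B, -, hA, hB, h⟩
    refine ⟨A, B, hA, hB, ?_⟩
    have : ω n ^ 4 ≤ 2 * edgesBetween f A B := by
      have h' : (ω n : ℝ) ^ 4 ≤ 2 * (edgesBetween f A B : ℝ) := by linarith
      exact_mod_cast h'
    omega
  refine tendsto_of_tendsto_of_tendsto_of_le_of_le' ?_ tendsto_const_nhds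
    (key.mono fun n h => h.1) (key.mono fun n h => h.2)
  have h := ENNReal.tendsto_ofReal ((tendsto_const_nhds (x := (1 : ℝ))).sub
    tendsto_one_div_atTop_nhds_zero_nat)
  simpa using h

end
end

section
/- Let C be a cycle graph whose vertex set is partitioned into three nonempty sets V₁, V₂, V₃, each of which induces a path in C (i.e., V₁, V₂, V₃ are three consecutive arcs of the cycle). Let Ĉ be a graph obtained from C by adding a (possibly empty) set S of new vertices, disjoint from V(C), such that S is an independent set in Ĉ and every vertex of S is adjacent in Ĉ to exactly three vertices of C, one in each of V₁, V₂ and V₃. Then: (a) Ĉ is 2-connected; and (b) every cutset {v₁, v₂} of Ĉ of size 2 satisfies {v₁, v₂} ⊆ V(C), and Ĉ ∖ {v₁, v₂} has exactly two connected components, one of which has its vertex set contained in V(C), induces a path in C, and consists entirely of vertices of degree 2 in Ĉ. -/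
open Finset SimpleGraph
open scoped Classical

noncomputable section

/-- A graph `G` is `d`-connected if it has at least `d + 1` vertices and removing any
set of at most `d − 1` vertices leaves a connected graph. -/
def IsKConnected {V : Type*} [Fintype V] (d : ℕ) (G : SimpleGraph V) : Prop :=
  d + 1 ≤ Fintype.card V ∧
    ∀ S : Finset V, S.card ≤ d - 1 → (G.induce ((↑S : Set V)ᶜ)).Connected

/-- `G` is a path graph: some Hamiltonian path uses every edge of `G`. -/
def IsPathGraph {V : Type*} (G : SimpleGraph V) : Prop :=
  ∃ (u v : V) (w : G.Walk u v), w.IsHamiltonian ∧ ∀ e ∈ G.edgeSet, e ∈ w.edges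

/-- `G` is a cycle graph: some Hamiltonian cycle uses every edge of `G`. -/
def IsCycleGraph {V : Type*} (G : SimpleGraph V) : Prop :=
  ∃ (u : V) (w : G.Walk u u), w.IsHamiltonianCycle ∧ ∀ e ∈ G.edgeSet, e ∈ w.edges

/-- A cutset of `G` is a set of vertices whose removal disconnects the graph. -/
def IsCutset {V : Type*} [Fintype V] [DecidableEq V] (G : SimpleGraph V) (U : Finset V) :
    Prop :=
  ¬ (G.induce ((↑U : Set V)ᶜ)).Connected

theorem aux_walk {W : Type*} (G : SimpleGraph W) (g : ℕ → W) (m : ℕ)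
    (h : ∀ i < m, G.Adj (g i) (g (i+1))) :
    ∃ w : G.Walk (g 0) (g m), w.support = (List.range (m+1)).map g ∧
      ∀ i < m, s(g i, g (i+1)) ∈ w.edges := by
  induction m with
  | zero => exact ⟨.nil, by simp, by simp⟩
  | succ m ih =>
    obtain ⟨w, hw, he⟩ := ih (fun i hi => h i (by omega))
    refine ⟨w.concat (h m (by omega)), ?_, ?_⟩
    · rw [Walk.support_concat, hw, List.range_succ (n := m+1), List.map_append]; rfl
    · intro i hi
      rw [Walk.edges_concat, List.concat_eq_append, List.mem_append]
      rcases Nat.lt_succ_iff_lt_or_eq.mp hi with h1 | rfl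
      · exact Or.inl (he i h1)
      · right; simp

theorem aux_path_conn {W : Type*} (G : SimpleGraph W) (h : IsPathGraph G) : G.Connected := by
  obtain ⟨u, v, w, hw, -⟩ := h
  rw [connected_iff_exists_forall_reachable]
  exact ⟨u, fun x => ⟨w.takeUntil x (hw.mem_support x)⟩⟩

theorem aux_attach {V : Type*} (G : SimpleGraph V) (s t : Set V) (hst : s ⊆ t)
    (hs : (G.induce s).Connected) (h : ∀ x ∈ t, x ∉ s → ∃ y ∈ s, G.Adj x y) :
    (G.induce t).Connected := by
  obtain ⟨⟨u, hu⟩⟩ := hs.nonempty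
  rw [connected_iff_exists_forall_reachable]
  have key : ∀ y (hy : y ∈ s), (G.induce t).Reachable ⟨u, hst hu⟩ ⟨y, hst hy⟩ := fun y hy =>
    (hs.preconnected ⟨u, hu⟩ ⟨y, hy⟩).map (induceHomOfLE G hst).toHom
  refine ⟨⟨u, hst hu⟩, ?_⟩
  rintro ⟨x, hx⟩
  by_cases hxs : x ∈ s
  · exact key x hxs
  · obtain ⟨y, hy, hxy⟩ := h x hx hxs
    refine (key y hy).trans (Adj.reachable ?_)
    exact hxy.symm

theorem aux_union {V : Type*} (G : SimpleGraph V) (s t : Set V)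
    (hs : (G.induce s).Connected) (ht : (G.induce t).Connected)
    (h : ∃ x ∈ s, ∃ y ∈ t, G.Adj x y) : (G.induce (s ∪ t)).Connected := by
  obtain ⟨x, hx, y, hy, hxy⟩ := h
  have h1 : (G.induce (s ∪ {x, y})).Connected :=
    induce_union_connected hs.preconnected (induce_pair_connected_of_adj hxy).preconnected
      ⟨x, hx, by simp⟩
  have h2 := induce_union_connected h1.preconnected ht.preconnected ⟨y, by simp, hy⟩
  have e : s ∪ t = s ∪ {x, y} ∪ t := by
    ext z; simp only [Set.mem_union, Set.mem_insert_iff, Set.mem_singleton_iff]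
    grind
  rw [e]; exact h2

theorem aux_side {V : Type*} (G : SimpleGraph V) (W A B : Set V)
    (hW : (G.induce W).Connected) (hAB : W ⊆ A ∪ B)
    (hno : ∀ a ∈ A, ∀ b ∈ B, ¬ G.Adj a b) : W ⊆ A ∨ W ⊆ B := by
  by_contra hcon
  push Not at hcon
  obtain ⟨h1, h2⟩ := hcon
  obtain ⟨b, hbW, hbA⟩ := Set.not_subset.mp h1
  obtain ⟨a, haW, haB⟩ := Set.not_subset.mp h2
  obtain ⟨w⟩ := hW.preconnected ⟨a, haW⟩ ⟨b, hbW⟩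
  have : ∀ (x y : W) (w : (G.induce W).Walk x y), (x : V) ∈ A → (y : V) ∈ A := by
    intro x y w
    induction w with
    | nil => exact id
    | cons h p ih =>
      intro hx
      apply ih
      rcases hAB (Subtype.property _) with h' | h'
      · exact h'
      · exact absurd h (hno _ hx _ h')
  exact hbA (this _ _ w ((hAB haW).resolve_right haB))

theorem aux_cycle0 {W : Type*} (G : SimpleGraph W) (v : W) (h : IsCycleGraph G) :
    ∃ p : G.Walk v v, p.IsCycle ∧ (∀ x, x ∈ p.support) ∧ ∀ e ∈ G.edgeSet, e ∈ p.edges := by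
  obtain ⟨u, w, hw, he⟩ := h
  exact ⟨w.rotate v (hw.mem_support v), (hw.rotate (hw.mem_support v)).isCycle,
    (hw.rotate (hw.mem_support v)).mem_support,
    fun e h => ((w.rotate_edges _ _).mem_iff).mpr (he e h)⟩

theorem aux_ham {W : Type*} (G : SimpleGraph W) {u v : W} (w : G.Walk u v) (hp : w.IsPath)
    (h : ∀ x, x ∈ w.support) (he : ∀ e ∈ G.edgeSet, e ∈ w.edges) : IsPathGraph G :=
  ⟨u, v, w, hp.isHamiltonian_of_mem h, he⟩

theorem aux_cycle {V : Type*} (G : SimpleGraph V) (s : Set V) (v : V) (hv : v ∈ s)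
    (h : IsCycleGraph (G.induce s)) :
    ∃ (n : ℕ) (f : ℕ → V), 3 ≤ n ∧ f 0 = v ∧ f n = v ∧ (∀ i, f i ∈ s) ∧
      (∀ i < n, ∀ j < n, f i = f j → i = j) ∧ (∀ x ∈ s, ∃ i < n, f i = x) ∧
      (∀ i, 0 < i → i < n → ∀ w ∈ s, (G.Adj (f i) w ↔ w = f (i-1) ∨ w = f (i+1))) := by
  obtain ⟨p, hc, hms, he'⟩ := aux_cycle0 (G.induce s) ⟨v, hv⟩ h
  have h3 := hc.three_le_length
  refine ⟨p.length, fun i => (p.getVert i : V), h3, by simp, by simp,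
    fun i => (p.getVert i).2, ?_, ?_, ?_⟩
  · intro i hi j hj hij
    exact hc.getVert_injOn' (by simp only [Set.mem_ofPred_eq]; omega)
      (by simp only [Set.mem_ofPred_eq]; omega) (Subtype.ext hij)
  · intro x hx
    obtain ⟨i, hi, hil⟩ := Walk.mem_support_iff_exists_getVert.mp (hms ⟨x, hx⟩)
    rcases hil.lt_or_eq with h | h
    · exact ⟨i, h, by simp [hi]⟩
    · refine ⟨0, by omega, ?_⟩
      subst h
      simp at hi
      simpa using hi
  · intro i h0 hi x hx
    have := hc.neighborSet_toSubgraph_internal (i := i) (by omega) hi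
    have h2 : (⟨x, hx⟩ : s) ∈ p.toSubgraph.neighborSet (p.getVert i) ↔ G.Adj (p.getVert i) x := by
      rw [Subgraph.mem_neighborSet]
      constructor
      · intro h; exact h.adj_sub
      · intro h
        rw [← Subgraph.mem_edgeSet, Walk.mem_edges_toSubgraph]
        exact he' _ h
    rw [← h2, this]
    simp [Subtype.ext_iff]

theorem aux_arc {V : Type*} (G : SimpleGraph V) (s : Set V) (n : ℕ) (f : ℕ → V)
    (hfs : ∀ i, f i ∈ s) (hfn : f n = f 0)
    (hinj : ∀ i < n, ∀ j < n, f i = f j → i = j)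
    (hadj : ∀ i, 0 < i → i < n → ∀ w ∈ s, (G.Adj (f i) w ↔ w = f (i-1) ∨ w = f (i+1)))
    (a b : ℕ) (ha : 0 < a) (hab : a ≤ b) (hb : b < n) (A : Set V)
    (hA : ∀ x, x ∈ A ↔ ∃ i, a ≤ i ∧ i ≤ b ∧ f i = x) :
    IsPathGraph (G.induce A) := by
  let g : ℕ → A := fun i => ⟨f (a + min i (b-a)), (hA _).2 ⟨_, by omega, by omega, rfl⟩⟩
  have hg : ∀ i ≤ b - a, (g i : V) = f (a+i) := fun i hi => by
    simp only [g, Nat.min_eq_left hi]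
  obtain ⟨w, hw, he⟩ := aux_walk (G.induce A) g (b-a) (by
    intro i hi
    change G.Adj (g i : V) (g (i+1) : V)
    rw [hg i (by omega), hg (i+1) (by omega), hadj _ (by omega) (by omega) _ (hfs _)]
    right; rfl)
  refine aux_ham _ w ?_ ?_ ?_
  · have hp : w.IsPath := by
      rw [Walk.isPath_def, hw]
      refine List.Nodup.map_on ?_ List.nodup_range
      intro i hi j hj hij
      simp only [List.mem_range] at hi hj
      have := congrArg Subtype.val hij
      rw [hg i (by omega), hg j (by omega)] at this
      have := hinj _ (by omega) _ (by omega) this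
      omega
    exact hp
  · rintro ⟨x, hx⟩
    rw [hw, List.mem_map]
    obtain ⟨i, h1, h2, rfl⟩ := (hA x).1 hx
    refine ⟨i - a, by simp; omega, Subtype.ext ?_⟩
    rw [hg _ (by omega)]
    simp only
    congr 1; omega
  · intro e
    refine Sym2.ind ?_ e
    rintro ⟨x, hx⟩ ⟨y, hy⟩ hxy
    have hxy' : G.Adj x y := hxy
    obtain ⟨i, h1, h2, rfl⟩ := (hA x).1 hx
    obtain ⟨j, h3, h4, rfl⟩ := (hA y).1 hy
    rw [hadj _ (by omega) (by omega) _ (hfs _)] at hxy'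
    have e1 : (⟨f i, hx⟩ : A) = g (i-a) := Subtype.ext (by
      rw [hg _ (by omega)]; simp only; congr 1; omega)
    have e2 : (⟨f j, hy⟩ : A) = g (j-a) := Subtype.ext (by
      rw [hg _ (by omega)]; simp only; congr 1; omega)
    rw [e1, e2]
    have hor : j + 1 = i ∨ j = i + 1 := by
      rcases hxy' with h | h
      · have := hinj _ (by omega) _ (by omega) h
        omega
      · by_cases hi : i + 1 < n
        · right; exact hinj _ (by omega) _ hi h
        · left
          exfalso
          have : i + 1 = n := by omega
          rw [this, hfn] at h
          have := hinj _ (by omega) _ (by omega) h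
          omega
    rcases hor with h | h
    · have := he (j-a) (by omega)
      rw [Sym2.eq_swap]
      convert this using 3; omega
    · have := he (i-a) (by omega)
      convert this using 3; omega

theorem aux_deg {V : Type*} [Fintype V] [DecidableEq V] (G : SimpleGraph V) (S : Finset V)
    (n : ℕ) (f : ℕ → V) (hn : 3 ≤ n)
    (hfs : ∀ i, f i ∉ S) (hfn : f n = f 0)
    (hinj : ∀ i < n, ∀ j < n, f i = f j → i = j)
    (hadj : ∀ i, 0 < i → i < n → ∀ w, w ∉ S → (G.Adj (f i) w ↔ w = f (i-1) ∨ w = f (i+1)))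
    (i : ℕ) (h0 : 0 < i) (hi : i < n) (hS : ∀ x ∈ S, ¬ G.Adj x (f i)) :
    (Finset.univ.filter (fun w => G.Adj (f i) w)).card = 2 := by
  have : Finset.univ.filter (fun w => G.Adj (f i) w) = {f (i-1), f (i+1)} := by
    ext w
    simp only [Finset.mem_filter, Finset.mem_univ, true_and, Finset.mem_insert,
      Finset.mem_singleton]
    by_cases hw : w ∈ S
    · constructor
      · intro h; exact absurd h.symm (hS w hw)
      · rintro (rfl | rfl)
        · exact absurd hw (hfs _)
        · exact absurd hw (hfs _)
    · exact hadj i h0 hi w hw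
  rw [this]
  apply Finset.card_pair
  intro h
  by_cases h1 : i + 1 < n
  · have := hinj _ (by omega) _ h1 h
    omega
  · have h2 : i + 1 = n := by omega
    rw [h2, hfn] at h
    have := hinj _ (by omega) _ (by omega) h
    omega

theorem aux_final {V : Type*} [Fintype V] [DecidableEq V] (G : SimpleGraph V) (S A B : Finset V)
    (v₁ v₂ : V) (hv1 : v₁ ∉ S) (hv2 : v₂ ∉ S)
    (hAB : ∀ x, x ∈ A ∪ B ↔ x ∉ S ∧ x ≠ v₁ ∧ x ≠ v₂) (hdis : Disjoint A B)
    (hA : IsPathGraph (G.induce (↑A : Set V))) (hB : IsPathGraph (G.induce (↑B : Set V)))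
    (hno : ∀ a ∈ A, ∀ b ∈ B, ¬ G.Adj a b)
    (hSB : ∀ x ∈ S, ∃ y ∈ B, G.Adj x y)
    (hdeg : ∀ u ∈ A, (∀ x ∈ S, ¬ G.Adj x u) →
      (Finset.univ.filter (fun w => G.Adj u w)).card = 2)
    (hcut : ¬ (G.induce ((↑({v₁, v₂} : Finset V) : Set V)ᶜ)).Connected) :
        ∃ P Q : Finset V,
          P ∪ Q = ({v₁, v₂} : Finset V)ᶜ ∧ Disjoint P Q ∧
          P.Nonempty ∧ Q.Nonempty ∧
          (∀ a ∈ P, ∀ b ∈ Q, ¬ G.Adj a b) ∧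
          (G.induce (↑P : Set V)).Connected ∧
          (G.induce (↑Q : Set V)).Connected ∧
          P ⊆ Sᶜ ∧ IsPathGraph (G.induce (↑P : Set V)) ∧
          ∀ u ∈ P, (Finset.univ.filter (fun w => G.Adj u w)).card = 2 := by
  have hAc := aux_path_conn _ hA
  have hBc := aux_path_conn _ hB
  have hQ : (G.induce (↑(B ∪ S) : Set V)).Connected := by
    refine aux_attach G (↑B) _ (by simp) hBc ?_
    intro x hx hxB
    have hxS : x ∈ S := by
      have := Finset.mem_coe.1 hx
      rcases Finset.mem_union.1 this with h | h
      · exact absurd h hxB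
      · exact h
    exact hSB x hxS
  have hun : A ∪ (B ∪ S) = ({v₁, v₂} : Finset V)ᶜ := by
    ext x
    have := hAB x
    simp only [Finset.mem_union, Finset.mem_compl, Finset.mem_insert, Finset.mem_singleton] at *
    constructor
    · intro h
      have : x ∈ S → x ≠ v₁ ∧ x ≠ v₂ := fun h => ⟨by rintro rfl; exact hv1 h, by rintro rfl; exact hv2 h⟩
      tauto
    · tauto
  have hSA : ∀ a ∈ A, ∀ x ∈ S, ¬ G.Adj x a := by
    intro a ha x hx hxa
    apply hcut
    have := aux_union G (↑A) (↑(B ∪ S)) hAc hQ ⟨a, ha, x, by simp [hx], hxa.symm⟩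
    rw [← Finset.coe_compl, ← hun, Finset.coe_union]
    exact this
  have hAS : ∀ a ∈ A, a ∉ S := fun a ha => ((hAB a).1 (Finset.mem_union_left _ ha)).1
  refine ⟨A, B ∪ S, hun, ?_, ?_, ?_, ?_, hAc, hQ, ?_, hA, ?_⟩
  · rw [Finset.disjoint_union_right]
    exact ⟨hdis, Finset.disjoint_left.2 hAS⟩
  · obtain ⟨⟨x, hx⟩⟩ := hAc.nonempty
    exact ⟨x, hx⟩
  · obtain ⟨⟨x, hx⟩⟩ := hQ.nonempty
    exact ⟨x, hx⟩
  · intro a ha b hb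
    rcases Finset.mem_union.1 hb with h | h
    · exact hno a ha b h
    · exact fun h' => hSA a ha b h h'.symm
  · intro a ha; simpa using hAS a ha
  · exact fun u hu => hdeg u hu (hSA u hu)

/-- Let `C` be a cycle graph whose vertex set is partitioned into three
nonempty consecutive arcs `V₁, V₂, V₃` (each inducing a path).  Let `Ĉ` (here `Chat`) be
obtained from `C` by adding an independent set `S` of new vertices, each adjacent to
exactly three vertices of `C`, one in each of `V₁`, `V₂`, `V₃`.  Then (a) `Ĉ` is
`2`-connected, and (b) every cutset `{v₁, v₂}` of size `2` lies in `V(C)` and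
`Ĉ ∖ {v₁, v₂}` has exactly two connected components, one of which is contained in
`V(C)`, induces a path in `C`, and consists of vertices of degree `2` in `Ĉ`.
(`C` is the induced subgraph of `Chat` on `Sᶜ`.) -/
theorem statement12 {V : Type*} [Fintype V] [DecidableEq V]
    (Chat : SimpleGraph V) (S V₁ V₂ V₃ : Finset V)
    (hpart : V₁ ∪ V₂ ∪ V₃ = Sᶜ)
    (h12 : Disjoint V₁ V₂) (h13 : Disjoint V₁ V₃) (h23 : Disjoint V₂ V₃)
    (hne1 : V₁.Nonempty) (hne2 : V₂.Nonempty) (hne3 : V₃.Nonempty)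
    (hcycle : IsCycleGraph (Chat.induce ((↑(Sᶜ) : Set V))))
    (hpath1 : IsPathGraph (Chat.induce (↑V₁ : Set V)))
    (hpath2 : IsPathGraph (Chat.induce (↑V₂ : Set V)))
    (hpath3 : IsPathGraph (Chat.induce (↑V₃ : Set V)))
    (hind : ∀ u ∈ S, ∀ v ∈ S, ¬ Chat.Adj u v)
    (hadj : ∀ x ∈ S, (V₁.filter (fun u => Chat.Adj x u)).card = 1 ∧
        (V₂.filter (fun u => Chat.Adj x u)).card = 1 ∧
        (V₃.filter (fun u => Chat.Adj x u)).card = 1) :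
    IsKConnected 2 Chat ∧
      ∀ v₁ v₂ : V, v₁ ≠ v₂ → IsCutset Chat {v₁, v₂} →
        (v₁ ∉ S ∧ v₂ ∉ S) ∧
        ∃ P Q : Finset V,
          P ∪ Q = ({v₁, v₂} : Finset V)ᶜ ∧ Disjoint P Q ∧
          P.Nonempty ∧ Q.Nonempty ∧
          (∀ a ∈ P, ∀ b ∈ Q, ¬ Chat.Adj a b) ∧
          (Chat.induce (↑P : Set V)).Connected ∧
          (Chat.induce (↑Q : Set V)).Connected ∧
          P ⊆ Sᶜ ∧ IsPathGraph (Chat.induce (↑P : Set V)) ∧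
          ∀ u ∈ P, (Finset.univ.filter (fun w => Chat.Adj u w)).card = 2 := by
  have hC : ∀ x, x ∉ S ↔ x ∈ V₁ ∨ x ∈ V₂ ∨ x ∈ V₃ := by
    intro x
    rw [← Finset.mem_compl, ← hpart]
    simp [or_assoc]
  have hn12 := Finset.disjoint_left.1 h12
  have hn13 := Finset.disjoint_left.1 h13
  have hn23 := Finset.disjoint_left.1 h23
  -- neighbours of vertices of S
  have hnb : ∀ x ∈ S, (∃ y ∈ V₁, Chat.Adj x y) ∧ (∃ y ∈ V₂, Chat.Adj x y) ∧
      (∃ y ∈ V₃, Chat.Adj x y) := by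
    intro x hx
    obtain ⟨h1, h2, h3⟩ := hadj x hx
    have aux : ∀ W : Finset V, (W.filter (fun u => Chat.Adj x u)).card = 1 →
        ∃ y ∈ W, Chat.Adj x y := by
      intro W h
      obtain ⟨y, hy⟩ := Finset.card_pos.1 (by omega : 0 < (W.filter (fun u => Chat.Adj x u)).card)
      exact ⟨y, (Finset.mem_filter.1 hy).1, (Finset.mem_filter.1 hy).2⟩
    exact ⟨aux _ h1, aux _ h2, aux _ h3⟩
  have hnb2 : ∀ x ∈ S, ∀ a b : V, ∃ y, y ∉ S ∧ y ≠ a ∧ y ≠ b ∧ Chat.Adj x y := by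
    intro x hx a b
    obtain ⟨⟨y1, h1, h1'⟩, ⟨y2, h2, h2'⟩, ⟨y3, h3, h3'⟩⟩ := hnb x hx
    have d12 : y1 ≠ y2 := by rintro rfl; exact hn12 h1 h2
    have d13 : y1 ≠ y3 := by rintro rfl; exact hn13 h1 h3
    have d23 : y2 ≠ y3 := by rintro rfl; exact hn23 h2 h3
    have c1 := (hC y1).2 (by tauto)
    have c2 := (hC y2).2 (by tauto)
    have c3 := (hC y3).2 (by tauto)
    by_cases e1 : y1 = a ∨ y1 = b
    · by_cases e2 : y2 = a ∨ y2 = b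
      · refine ⟨y3, c3, ?_, ?_, h3'⟩ <;> grind
      · exact ⟨y2, c2, by tauto, by tauto, h2'⟩
    · exact ⟨y1, c1, by tauto, by tauto, h1'⟩
  have hcyc : ∀ v, v ∉ S → ∃ (n : ℕ) (f : ℕ → V), 3 ≤ n ∧ f 0 = v ∧ f n = v ∧ (∀ i, f i ∉ S) ∧
      (∀ i < n, ∀ j < n, f i = f j → i = j) ∧ (∀ x, x ∉ S → ∃ i < n, f i = x) ∧
      (∀ i, 0 < i → i < n → ∀ w, w ∉ S →
        (Chat.Adj (f i) w ↔ w = f (i-1) ∨ w = f (i+1))) := by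
    intro v hv
    have := aux_cycle Chat (↑(Sᶜ)) v (by simpa using hv) hcycle
    simpa using this
  have harc : ∀ (n : ℕ) (f : ℕ → V), f n = f 0 → (∀ i, f i ∉ S) →
      (∀ i < n, ∀ j < n, f i = f j → i = j) →
      (∀ i, 0 < i → i < n → ∀ w, w ∉ S →
        (Chat.Adj (f i) w ↔ w = f (i-1) ∨ w = f (i+1))) →
      ∀ a b : ℕ, 0 < a → a ≤ b → b < n →
      IsPathGraph (Chat.induce (↑((Finset.Icc a b).image f) : Set V)) := by
    intro n f hfn hfs hinj hadj' a b ha hab hb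
    refine aux_arc Chat (↑(Sᶜ)) n f (by simpa using hfs) hfn hinj (by simpa using hadj')
      a b ha hab hb _ ?_
    intro x
    simp [and_assoc]
  -- removing one cycle vertex
  have key1 : ∀ v, v ∉ S → ∀ T : Set V, v ∉ T → (∀ x, x ∉ S → x ≠ v → x ∈ T) →
      (Chat.induce T).Connected := by
    intro v hv T hvT hT
    obtain ⟨n, f, hn, hf0, hfn, hfs, hinj, hsurj, hadj'⟩ := hcyc v hv
    have hpth := aux_path_conn _ (harc n f (by rw [hfn, hf0]) hfs hinj hadj' 1 (n-1)
      (by omega) (by omega) (by omega))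
    have hmem : ∀ x, x ∉ S → x ≠ v → x ∈ (↑((Finset.Icc 1 (n-1)).image f) : Set V) := by
      intro x hx hxv
      obtain ⟨i, hi, rfl⟩ := hsurj x hx
      have : i ≠ 0 := by rintro rfl; exact hxv hf0
      simp only [Finset.coe_image, Set.mem_image, Finset.coe_Icc, Set.mem_Icc]
      exact ⟨i, by omega, rfl⟩
    refine aux_attach Chat _ T ?_ hpth ?_
    · intro x hx
      simp only [Finset.coe_image, Set.mem_image, Finset.coe_Icc, Set.mem_Icc] at hx
      obtain ⟨i, hi, rfl⟩ := hx
      refine hT _ (hfs i) ?_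
      rw [← hf0]
      intro h
      have := hinj _ (by omega) _ (by omega) h
      omega
    · intro x hx hx'
      have hxS : x ∈ S := by
        by_contra h
        exact hx' (hmem x h (by rintro rfl; exact hvT hx))
      obtain ⟨y, hy, hya, -, hxy⟩ := hnb2 x hxS v v
      exact ⟨y, hmem y hy hya, hxy⟩
  have key0 : ∀ T : Set V, (∀ x, x ∉ S → x ∈ T) → (Chat.induce T).Connected := by
    intro T hT
    obtain ⟨v, hv⟩ := hne1
    have hvS : v ∉ S := (hC v).2 (Or.inl hv)
    have h1 := key1 v hvS (T \ {v}) (by simp) (fun x hx hxv => ⟨hT x hx, hxv⟩)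
    refine aux_attach Chat _ T Set.sdiff_subset h1 ?_
    intro x hx hx'
    have : x = v := by
      by_contra h
      exact hx' ⟨hx, h⟩
    subst this
    obtain ⟨n, f, hn, hf0, hfn, hfs, hinj, hsurj, hadj'⟩ := hcyc x hvS
    have : Chat.Adj (f 1) x := by
      rw [hadj' 1 (by omega) (by omega) x hvS]
      left; exact hf0.symm
    exact ⟨f 1, ⟨hT _ (hfs 1), this.ne⟩, this.symm⟩
  refine ⟨⟨?_, ?_⟩, ?_⟩
  · obtain ⟨a, ha⟩ := hne1
    obtain ⟨b, hb⟩ := hne2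
    obtain ⟨c, hc⟩ := hne3
    have : ({a, b, c} : Finset V).card = 3 := by
      rw [Finset.card_eq_three]
      exact ⟨a, b, c, by rintro rfl; exact hn12 ha hb, by rintro rfl; exact hn13 ha hc,
        by rintro rfl; exact hn23 hb hc, rfl⟩
    have h2 := Finset.card_le_univ ({a, b, c} : Finset V)
    omega
  · intro U hU
    by_cases h : ∃ v ∈ U, v ∉ S
    · obtain ⟨v, hvU, hvS⟩ := h
      refine key1 v hvS _ (by simpa using hvU) ?_
      intro x hx hxv hxU
      exact hxv (Finset.card_le_one.1 hU x hxU v hvU)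
    · push Not at h
      exact key0 _ (fun x hx hxU => hx (h x hxU))
  · intro v₁ v₂ hne hcut
    unfold IsCutset at hcut
    have hb : v₁ ∉ S ∧ v₂ ∉ S := by
      by_cases a1 : v₁ ∈ S
      · exfalso
        by_cases a2 : v₂ ∈ S
        · exact hcut (key0 _ (by
            intro x hx; simp only [Set.mem_compl_iff, Finset.mem_coe, Finset.mem_insert,
              Finset.mem_singleton]
            rintro (rfl | rfl) <;> contradiction))
        · exact hcut (key1 v₂ a2 _ (by simp) (by
            intro x hx hx2; simp only [Set.mem_compl_iff, Finset.mem_coe, Finset.mem_insert,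
              Finset.mem_singleton]
            rintro (rfl | rfl) <;> contradiction))
      · refine ⟨a1, fun a2 => ?_⟩
        exact hcut (key1 v₁ a1 _ (by simp) (by
            intro x hx hx2; simp only [Set.mem_compl_iff, Finset.mem_coe, Finset.mem_insert,
              Finset.mem_singleton]
            rintro (rfl | rfl) <;> contradiction))
    obtain ⟨hv1, hv2⟩ := hb
    refine ⟨⟨hv1, hv2⟩, ?_⟩
    obtain ⟨n, f, hn, hf0, hfn, hfs, hinj, hsurj, hadj'⟩ := hcyc v₁ hv1
    obtain ⟨k, hk, hfk⟩ := hsurj v₂ hv2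
    have hk0 : k ≠ 0 := by rintro rfl; exact hne (hf0.symm.trans hfk)
    have harc' := harc n f (by rw [hfn, hf0]) hfs hinj hadj'
    have hmemiff : ∀ a b x, x ∈ (Finset.Icc a b).image f ↔ ∃ i, a ≤ i ∧ i ≤ b ∧ f i = x := by
      intro a b x; simp [and_assoc]
    have hindex : ∀ x, x ∉ S → x ≠ v₁ → x ≠ v₂ → ∃ i, 0 < i ∧ i < n ∧ i ≠ k ∧ f i = x := by
      intro x hx h1 h2
      obtain ⟨i, hi, rfl⟩ := hsurj x hx
      refine ⟨i, ?_, hi, ?_, rfl⟩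
      · rcases Nat.eq_zero_or_pos i with rfl | h
        · exact absurd hf0 h1
        · exact h
      · rintro rfl; exact h2 hfk
    have hindex' : ∀ i, 0 < i → i < n → i ≠ k → f i ∉ S ∧ f i ≠ v₁ ∧ f i ≠ v₂ := by
      intro i h0 hi hik
      refine ⟨hfs i, ?_, ?_⟩
      · rw [← hf0]; intro h
        have := hinj _ (by omega) _ (by omega) h
        omega
      · rw [← hfk]; intro h
        exact hik (hinj _ (by omega) _ (by omega) h)
    -- a single arc cannot be everything
    have hone : ∀ a b, 0 < a → a ≤ b → b < n → (∀ i, 0 < i → i < n → (i ≠ k ↔ a ≤ i ∧ i ≤ b)) →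
        False := by
      intro a b ha hab hbn hik
      apply hcut
      refine aux_attach Chat _ _ ?_ (aux_path_conn _ (harc' a b ha hab hbn)) ?_
      · intro x hx
        obtain ⟨i, h1, h2, rfl⟩ := (hmemiff a b x).1 hx
        have := hindex' i (by omega) (by omega) ((hik i (by omega) (by omega)).2 ⟨h1, h2⟩)
        simp [this.2.1, this.2.2]
      · intro x hx hx'
        have hm : ∀ y, y ∉ S → y ≠ v₁ → y ≠ v₂ → y ∈ (↑((Finset.Icc a b).image f) : Set V) := by
          intro y hy h1 h2
          obtain ⟨i, hi0, hin, hne', rfl⟩ := hindex y hy h1 h2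
          have := (hik i hi0 hin).1 hne'
          exact (hmemiff a b _).2 ⟨i, this.1, this.2, rfl⟩
        have hx2 : x ≠ v₁ ∧ x ≠ v₂ := by simpa using hx
        have hxS : x ∈ S := by
          by_contra h
          exact hx' (hm x h hx2.1 hx2.2)
        obtain ⟨y, hy, hya, hyb, hxy⟩ := hnb2 x hxS v₁ v₂
        exact ⟨y, hm y hy hya hyb, hxy⟩
    have hk1 : k ≠ 1 := fun h => hone 2 (n-1) (by omega) (by omega) (by omega) (by omega)
    have hkn : k ≠ n - 1 := fun h => hone 1 (n-2) (by omega) (by omega) (by omega) (by omega)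
    have pA := harc' 1 (k-1) (by omega) (by omega) (by omega)
    have pB := harc' (k+1) (n-1) (by omega) (by omega) (by omega)
    have mA := hmemiff 1 (k-1)
    have mB := hmemiff (k+1) (n-1)
    generalize hAdef : (Finset.Icc 1 (k-1)).image f = A at pA mA
    generalize hBdef : (Finset.Icc (k+1) (n-1)).image f = B at pB mB
    have hAB : ∀ x, x ∈ A ∪ B ↔ x ∉ S ∧ x ≠ v₁ ∧ x ≠ v₂ := by
      intro x
      rw [Finset.mem_union, mA, mB]
      constructor
      · rintro (⟨i, h1, h2, rfl⟩ | ⟨i, h1, h2, rfl⟩)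
        · exact hindex' i (by omega) (by omega) (by omega)
        · exact hindex' i (by omega) (by omega) (by omega)
      · rintro ⟨h1, h2, h3⟩
        obtain ⟨i, hi0, hin, hik, rfl⟩ := hindex x h1 h2 h3
        rcases Nat.lt_or_gt_of_ne hik with h | h
        · left; exact ⟨i, by omega, by omega, rfl⟩
        · right; exact ⟨i, by omega, by omega, rfl⟩
    have hdis : Disjoint A B := by
      rw [Finset.disjoint_left]
      intro x hx hx'
      obtain ⟨i, h1, h2, rfl⟩ := (mA x).1 hx
      obtain ⟨j, h3, h4, h5⟩ := (mB _).1 hx'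
      have := hinj _ (by omega) _ (by omega) h5
      omega
    have hno : ∀ a ∈ A, ∀ b ∈ B, ¬ Chat.Adj a b := by
      intro a ha b hb hab
      obtain ⟨i, h1, h2, rfl⟩ := (mA a).1 ha
      obtain ⟨j, h3, h4, rfl⟩ := (mB b).1 hb
      rw [hadj' i (by omega) (by omega) _ (hfs _)] at hab
      rcases hab with h | h
      · have := hinj _ (by omega) _ (by omega) h
        omega
      · have := hinj _ (by omega) _ (by omega) h
        omega
    have hdeg : ∀ i, 0 < i → i < n → (∀ x ∈ S, ¬ Chat.Adj x (f i)) →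
        (Finset.univ.filter (fun w => Chat.Adj (f i) w)).card = 2 :=
      aux_deg Chat S n f hn hfs (by rw [hfn, hf0]) hinj hadj'
    have hdegA : ∀ u ∈ A, (∀ x ∈ S, ¬ Chat.Adj x u) →
        (Finset.univ.filter (fun w => Chat.Adj u w)).card = 2 := by
      intro u hu
      obtain ⟨i, h1, h2, rfl⟩ := (mA u).1 hu
      exact hdeg i (by omega) (by omega)
    have hdegB : ∀ u ∈ B, (∀ x ∈ S, ¬ Chat.Adj x u) →
        (Finset.univ.filter (fun w => Chat.Adj u w)).card = 2 := by
      intro u hu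
      obtain ⟨i, h1, h2, rfl⟩ := (mB u).1 hu
      exact hdeg i (by omega) (by omega)
    -- some class avoids both vertices
    have hW : ∃ W : Finset V, (Chat.induce (↑W : Set V)).Connected ∧ (∀ x ∈ W, x ∉ S) ∧
        v₁ ∉ W ∧ v₂ ∉ W ∧ ∀ x ∈ S, ∃ y ∈ W, Chat.Adj x y := by
      by_cases c1 : v₁ ∈ V₁ ∨ v₂ ∈ V₁
      · by_cases c2 : v₁ ∈ V₂ ∨ v₂ ∈ V₂
        · refine ⟨V₃, aux_path_conn _ hpath3, fun x hx => (hC x).2 (by tauto), ?_, ?_,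
            fun x hx => (hnb x hx).2.2⟩
          · intro h
            have := @hn12 v₁; have := @hn13 v₁; have := @hn23 v₁
            have := @hn12 v₂
            tauto
          · intro h
            have := @hn12 v₂; have := @hn13 v₂; have := @hn23 v₂
            have := @hn12 v₁
            tauto
        · exact ⟨V₂, aux_path_conn _ hpath2, fun x hx => (hC x).2 (by tauto), by tauto, by tauto,
            fun x hx => (hnb x hx).2.1⟩
      · exact ⟨V₁, aux_path_conn _ hpath1, fun x hx => (hC x).2 (by tauto), by tauto, by tauto,
            fun x hx => (hnb x hx).1⟩
    obtain ⟨W, hWc, hWS, hW1, hW2, hWn⟩ := hW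
    have hside := aux_side Chat (↑W) (↑A) (↑B) hWc (by
      intro x hx
      have := (hAB x).2 ⟨hWS x hx, by rintro rfl; exact hW1 hx, by rintro rfl; exact hW2 hx⟩
      simpa using this) hno
    rcases hside with h | h
    · refine aux_final Chat S B A v₁ v₂ hv1 hv2 (by rw [Finset.union_comm]; exact hAB) hdis.symm
        pB pA (fun a ha b hb h => hno b hb a ha h.symm) ?_ hdegB hcut
      intro x hx
      obtain ⟨y, hy, hxy⟩ := hWn x hx
      exact ⟨y, h hy, hxy⟩
    · refine aux_final Chat S A B v₁ v₂ hv1 hv2 hAB hdis pA pB hno ?_ hdegA hcut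
      intro x hx
      obtain ⟨y, hy, hxy⟩ := hWn x hx
      exact ⟨y, h hy, hxy⟩

end
end

section
/- Let C be a cycle graph whose vertex set is partitioned into three nonempty sets V₁, V₂, V₃, each of which induces a path in C (i.e., V₁, V₂, V₃ are three consecutive arcs of the cycle). Let Ĉ be a graph obtained from C by adding a nonempty set S of new vertices, disjoint from V(C), such that S is an independent set in Ĉ and every vertex of S is adjacent in Ĉ to exactly three vertices of C, one in each of V₁, V₂ and V₃. For every vertex v ∈ V(C) of degree 2 in Ĉ, let P(v) be the unique path in C containing v whose two endpoints have degree 3 in Ĉ and all of whose remaining vertices have degree 2 in Ĉ. Then every graph C̃ obtained from Ĉ by adding, for each vertex v ∈ V(C) of degree 2 in Ĉ, an edge joining v to some vertex of V(Ĉ) ∖ V(P(v)), is 3-connected. -/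
open Finset SimpleGraph
open scoped Classical

noncomputable section

theorem aux_closed {W : Type*} {G : SimpleGraph W} (hG : G.Preconnected) (X : Set W)
    (hX : ∀ a ∈ X, ∀ b, G.Adj a b → b ∈ X) {x y : W} (hx : x ∈ X) : y ∈ X := by
  obtain ⟨w⟩ := hG x y
  induction w with
  | nil => exact hx
  | cons h p ih => exact ih (hX _ hx _ h)

theorem aux_path_pre {W : Type*} {G : SimpleGraph W} (h : IsPathGraph G) : G.Preconnected := by
  obtain ⟨u, v, w, hw, -⟩ := h
  have key : ∀ a, G.Reachable u a := fun a => ⟨w.takeUntil a (hw.mem_support a)⟩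
  exact fun a b => (key a).symm.trans (key b)

theorem aux_cycle_pre {W : Type*} {G : SimpleGraph W} (h : IsCycleGraph G) : G.Preconnected := by
  obtain ⟨u, w, hw, -⟩ := h
  have key : ∀ a, G.Reachable u a := fun a => ⟨w.takeUntil a (hw.mem_support a)⟩
  exact fun a b => (key a).symm.trans (key b)

theorem aux_cycle_deg {W : Type*} {G : SimpleGraph W} (h : IsCycleGraph G) (v : W) :
    (G.neighborSet v).ncard = 2 := by
  obtain ⟨u, w, hw, he⟩ := h
  rw [← hw.isCycle.ncard_neighborSet_toSubgraph_eq_two (hw.mem_support v)]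
  congr 1
  ext b
  simp only [SimpleGraph.mem_neighborSet, Subgraph.mem_neighborSet,
    Walk.adj_toSubgraph_iff_mem_edges]
  exact ⟨fun h => he _ h, fun h => w.edges_subset_edgeSet h⟩

theorem aux_cycle_del {W : Type*} {G : SimpleGraph W} (h : IsCycleGraph G) (t : W) (X : Set W)
    (hX : ∀ a ∈ X, a ≠ t → ∀ b, b ≠ t → G.Adj a b → b ∈ X) {x y : W} (hx : x ∈ X)
    (hxt : x ≠ t) (hyt : y ≠ t) : y ∈ X := by
  obtain ⟨u, w', hw', -⟩ := h
  obtain ⟨w, hw⟩ : ∃ w : G.Walk t t, w.IsHamiltonianCycle :=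
    ⟨w'.rotate t (hw'.mem_support t), by simpa using hw'⟩
  have hint : ∀ i, 1 ≤ i → i < w.length → w.getVert i ≠ t := by
    intro i h1 h2 h3
    have := (hw.isCycle.getVert_endpoint_iff (by omega)).1 h3
    omega
  have hex : ∀ z, z ≠ t → ∃ i, 1 ≤ i ∧ i < w.length ∧ w.getVert i = z := by
    intro z hz
    obtain ⟨i, hi, hi'⟩ := Walk.mem_support_iff_exists_getVert.1 (hw.mem_support z)
    refine ⟨i, ?_, ?_, hi⟩
    · rcases Nat.eq_zero_or_pos i with rfl | h
      · simp at hi; exact absurd hi.symm hz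
      · exact h
    · rcases Nat.lt_or_ge i w.length with h | h
      · exact h
      · rw [w.getVert_of_length_le h] at hi; exact absurd hi.symm hz
  have step : ∀ i, 1 ≤ i → i < w.length → (w.getVert i ∈ X ↔ w.getVert 1 ∈ X) := by
    intro i h1
    induction i, h1 using Nat.le_induction with
    | base => intro _; rfl
    | succ i h1 ih =>
      intro h2
      rw [← ih (by omega)]
      have ha := w.adj_getVert_succ (i := i) (by omega)
      exact ⟨fun h => hX _ h (hint _ (by omega) h2) _ (hint _ h1 (by omega)) ha.symm,
        fun h => hX _ h (hint _ h1 (by omega)) _ (hint _ (by omega) h2) ha⟩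
  obtain ⟨i, hi1, hi2, rfl⟩ := hex x hxt
  obtain ⟨j, hj1, hj2, rfl⟩ := hex y hyt
  exact (step j hj1 hj2).2 ((step i hi1 hi2).1 hx)

theorem aux_core {V : Type*} [Fintype V] [DecidableEq V]
    (Chat : SimpleGraph V) (S K : Finset V) (hKS : ∀ x ∈ K, x ∉ S)
    (hKne : K.Nonempty)
    (hC2 : ∀ v, v ∉ S → (Sᶜ.filter (fun w => Chat.Adj v w)).card = 2)
    (hC1 : ∀ (t : V) (X : Set V) (x y : V), x ∈ X → x ∉ S → x ≠ t → y ∉ S → y ≠ t →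
      (∀ a ∈ X, a ∉ S → a ≠ t → ∀ b, b ∉ S → b ≠ t → Chat.Adj a b → b ∈ X) → y ∈ X)
    (hC0 : ∀ (X : Set V) (x y : V), x ∈ X → x ∉ S → y ∉ S →
      (∀ a ∈ X, a ∉ S → ∀ b, b ∉ S → Chat.Adj a b → b ∈ X) → y ∈ X)
    (hK : ∀ s ∈ S, ∃ u ∈ K, Chat.Adj s u)
    (P : V → Finset V)
    (hP : ∀ v ∈ Sᶜ, (Finset.univ.filter (fun w => Chat.Adj v w)).card = 2 →
        v ∈ P v ∧ 
        (∀ u ∈ P v, ((P v).filter (fun w => Chat.Adj u w)).card ≤ 1 →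
          (Finset.univ.filter (fun w => Chat.Adj u w)).card = 3))
    (Ctil : SimpleGraph V)
    (hle : Chat ≤ Ctil)
    (hnew : ∀ v ∈ Sᶜ, (Finset.univ.filter (fun w => Chat.Adj v w)).card = 2 →
        ∃ u, u ∉ P v ∧ Ctil.Adj v u)
    (T : Finset V) (hT : T.card ≤ 2) (A B : Set V)
    (hcov : ∀ x, x ∉ T → x ∈ A ∨ x ∈ B) (hAT : ∀ x ∈ A, x ∉ T) (hBT : ∀ x ∈ B, x ∉ T)
    (hAB : ∀ x ∈ A, x ∉ B)
    (hno : ∀ x ∈ A, ∀ y ∈ B, ¬ Ctil.Adj x y)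
    (hB : B.Nonempty) (hKA : ∀ x ∈ K, x ∈ A) : False := by
  obtain ⟨k, hk⟩ := hKne
  have hkA := hKA k hk
  have hkS := hKS k hk
  have hBS : ∀ x ∈ B, x ∉ S := by
    intro x hx hs
    obtain ⟨u, hu, hxu⟩ := hK x hs
    exact hno u (hKA u hu) x hx (hle hxu.symm)
  obtain ⟨v, hv⟩ := hB
  -- neighbours of B
  have hnB : ∀ a ∈ B, ∀ b, Ctil.Adj a b → b ∈ B ∨ b ∈ T := by
    intro a ha b hab
    by_cases hbT : b ∈ T
    · exact Or.inr hbT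
    · rcases hcov b hbT with h | h
      · exact absurd hab.symm (hno b h a ha)
      · exact Or.inl h
  -- separation by a single vertex is impossible
  have one : ∀ (t : V) (X : Set V) (x y : V), x ∈ X → x ∉ S → x ∉ T → y ∉ S → y ∉ T → y ∉ X →
      (∀ a ∈ X, a ∉ S → ∀ b, b ∉ S → Chat.Adj a b → b ∈ X ∨ b = t) → t ∈ T → False := by
    intro t X x y hx hxS hxT hyS hyT hyX hcl ht
    apply hyX
    refine hC1 t X x y hx hxS (by rintro rfl; exact hxT ht) hyS (by rintro rfl; exact hyT ht) ?_
    intro a ha haS hat b hb hbt hab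
    exact (hcl a ha haS b hb hab).resolve_right hbt
  have hTS : T.card = 2 ∧ ∀ t ∈ T, t ∉ S := by
    by_contra hcon
    have hc : (T \ S).card ≤ 1 := by
      by_contra hlt
      have h2 : T \ S = T := Finset.eq_of_subset_of_card_le Finset.sdiff_subset (by omega)
      apply hcon
      refine ⟨by rw [h2] at hlt; omega, fun t ht => ?_⟩
      rw [← h2] at ht
      exact (Finset.mem_sdiff.1 ht).2
    rcases Finset.eq_empty_or_nonempty (T \ S) with h | ⟨t, ht⟩
    · refine hAB k hkA (hC0 B v k hv (hBS v hv) hkS ?_)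
      intro a ha _ b hb hab
      refine (hnB a ha b (hle hab)).resolve_right (fun hbT => ?_)
      have : b ∈ T \ S := Finset.mem_sdiff.2 ⟨hbT, hb⟩
      simp [h] at this
    · refine one t B v k hv (hBS v hv) (hBT v hv) hkS (hAT k hkA) (hAB k hkA) ?_
        (Finset.mem_sdiff.1 ht).1
      intro a ha _ b hb hab
      rcases hnB a ha b (hle hab) with h | h
      · exact Or.inl h
      · exact Or.inr (Finset.card_le_one.1 hc b (Finset.mem_sdiff.2 ⟨h, hb⟩) t ht)
  obtain ⟨hT2, hTS⟩ := hTS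
  -- two-vertex separation
  have two : ∀ (X : Set V) (x y : V), x ∈ X → x ∉ S → x ∉ T → y ∉ S → y ∉ T → y ∉ X →
      (∀ a ∈ X, a ∉ S → ∀ b, b ∉ S → Chat.Adj a b → b ∈ X ∨ b ∈ T) →
      ∀ t ∈ T, ∃ a ∈ X, a ∉ S ∧ Chat.Adj t a := by
    intro X x y hx hxS hxT hyS hyT hyX hcl t ht
    by_contra hcon
    push Not at hcon
    obtain ⟨t', ht', hu⟩ : ∃ t' ∈ T, ∀ z ∈ T, z ≠ t → z = t' := by
      obtain ⟨p, q, hpq, rfl⟩ := Finset.card_eq_two.1 hT2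
      simp only [Finset.mem_insert, Finset.mem_singleton] at ht ⊢
      rcases ht with rfl | rfl
      · exact ⟨q, Or.inr rfl, by tauto⟩
      · exact ⟨p, Or.inl rfl, by tauto⟩
    refine one t' X x y hx hxS hxT hyS hyT hyX ?_ ht'
    intro a ha haS b hb hab
    rcases hcl a ha haS b hb hab with h | h
    · exact Or.inl h
    · refine Or.inr (hu b h ?_)
      rintro rfl
      exact hcon a ha haS hab.symm
  have hTA : ∀ t ∈ T, ∃ a ∈ A, a ∉ S ∧ Chat.Adj t a := by
    refine two A k v hkA hkS (hAT k hkA) (hBS v hv) (hBT v hv) (fun h => hAB v h hv) ?_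
    intro a ha _ b _ hab
    by_cases hbT : b ∈ T
    · exact Or.inr hbT
    · rcases hcov b hbT with h | h
      · exact Or.inl h
      · exact absurd (hle hab) (hno a ha b h)
  have hdeg : ∀ b ∈ B, (Finset.univ.filter (fun w => Chat.Adj b w)).card = 2 := by
    intro b hb
    rw [← hC2 b (hBS b hb)]
    congr 1
    ext z
    simp only [Finset.mem_filter, Finset.mem_univ, true_and, Finset.mem_compl]
    refine ⟨fun h => ⟨?_, h⟩, fun h => h.2⟩
    rcases hnB b hb z (hle h) with h | h
    · exact hBS z h
    · exact hTS z h
  obtain ⟨hvP, hend⟩ := hP v (by simpa using hBS v hv) (hdeg v hv)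
  have hPcl : ∀ a ∈ B, a ∈ P v → ∀ b, Chat.Adj a b → b ∈ P v := by
    intro a ha haP b hab
    have h2 := hdeg a ha
    have h3 : ¬ ((P v).filter (fun w => Chat.Adj a w)).card ≤ 1 := by
      intro h
      have := hend a haP h
      omega
    have h4 : (P v).filter (fun w => Chat.Adj a w) =
        Finset.univ.filter (fun w => Chat.Adj a w) :=
      Finset.eq_of_subset_of_card_le (Finset.filter_subset_filter _ (Finset.subset_univ _))
        (by omega)
    have h5 : b ∈ (P v).filter (fun w => Chat.Adj a w) := by rw [h4]; simpa using hab
    exact (Finset.mem_filter.1 h5).1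
  have hTD : ∀ t ∈ T, ∃ a ∈ {a | a ∈ B ∧ a ∈ P v}, a ∉ S ∧ Chat.Adj t a := by
    refine two _ v k ⟨hv, hvP⟩ (hBS v hv) (hBT v hv) hkS (hAT k hkA)
      (fun h => hAB k hkA h.1) ?_
    rintro a ⟨ha, haP⟩ _ b _ hab
    rcases hnB a ha b (hle hab) with h | h
    · exact Or.inl ⟨h, hPcl a ha haP b hab⟩
    · exact Or.inr h
  have hTP : ∀ t ∈ T, t ∈ P v := by
    intro t ht
    obtain ⟨a, ⟨ha, haP⟩, -, hta⟩ := hTD t ht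
    exact hPcl a ha haP t hta.symm
  have hBP : ∀ b ∈ B, b ∈ P v := by
    by_contra hcon
    push Not at hcon
    obtain ⟨e, he, heP⟩ := hcon
    have hTE : ∀ t ∈ T, ∃ a ∈ {a | a ∈ B ∧ a ∉ P v}, a ∉ S ∧ Chat.Adj t a := by
      refine two _ e k ⟨he, heP⟩ (hBS e he) (hBT e he) hkS (hAT k hkA)
        (fun h => hAB k hkA h.1) ?_
      rintro a ⟨ha, haP⟩ _ b _ hab
      rcases hnB a ha b (hle hab) with h | h
      · exact Or.inl ⟨h, fun hbP => haP (hPcl b h hbP a hab.symm)⟩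
      · exact Or.inr h
    obtain ⟨t, ht⟩ : T.Nonempty := Finset.card_pos.1 (by omega)
    obtain ⟨a, haA, haS, hta⟩ := hTA t ht
    obtain ⟨d, ⟨hdB, hdP⟩, hdS, htd⟩ := hTD t ht
    obtain ⟨f, ⟨hfB, hfP⟩, hfS, htf⟩ := hTE t ht
    have h1 : a ≠ d := by rintro rfl; exact hAB a haA hdB
    have h2 : a ≠ f := by rintro rfl; exact hAB a haA hfB
    have h3 : d ≠ f := by rintro rfl; exact hfP hdP
    have hc : ({a, d, f} : Finset V).card = 3 := Finset.card_eq_three.2 ⟨a, d, f, h1, h2, h3, rfl⟩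
    have hsub : ({a, d, f} : Finset V) ⊆ Sᶜ.filter (fun w => Chat.Adj t w) := by
      intro z hz
      simp only [Finset.mem_insert, Finset.mem_singleton] at hz
      simp only [Finset.mem_filter, Finset.mem_compl]
      rcases hz with rfl | rfl | rfl
      · exact ⟨haS, hta⟩
      · exact ⟨hdS, htd⟩
      · exact ⟨hfS, htf⟩
    have := Finset.card_le_card hsub
    rw [hc, hC2 t (hTS t ht)] at this
    omega
  obtain ⟨u, huP, hvu⟩ := hnew v (by simpa using hBS v hv) (hdeg v hv)
  rcases hnB v hv u hvu with h | h
  · exact huP (hBP u h)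
  · exact huP (hTP u h)

/-- With `C`, `V₁`, `V₂`, `V₃`, `S` and `Ĉ` (here `Chat`) as in the setup of
Statement 12, but with `S` nonempty, for each vertex `v ∈ V(C)` of degree `2` in `Ĉ` let
`P v` be the (unique) path in `C` containing `v` whose endpoints have degree `3` in `Ĉ`
and whose remaining vertices have degree `2` in `Ĉ` (characterised below by `hP`:
endpoints are the vertices with at most one neighbour inside `P v`).  Then every graph
`C̃` (here `Ctil`) obtained from `Ĉ` by adding, for each vertex `v ∈ V(C)` of degree `2`
in `Ĉ`, an edge joining `v` to some vertex outside `P v`, is `3`-connected. -/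
theorem statement13 {V : Type*} [Fintype V] [DecidableEq V]
    (Chat : SimpleGraph V) (S V₁ V₂ V₃ : Finset V)
    (hSne : S.Nonempty)
    (hpart : V₁ ∪ V₂ ∪ V₃ = Sᶜ)
    (h12 : Disjoint V₁ V₂) (h13 : Disjoint V₁ V₃) (h23 : Disjoint V₂ V₃)
    (hne1 : V₁.Nonempty) (hne2 : V₂.Nonempty) (hne3 : V₃.Nonempty)
    (hcycle : IsCycleGraph (Chat.induce ((↑(Sᶜ) : Set V))))
    (hpath1 : IsPathGraph (Chat.induce (↑V₁ : Set V)))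
    (hpath2 : IsPathGraph (Chat.induce (↑V₂ : Set V)))
    (hpath3 : IsPathGraph (Chat.induce (↑V₃ : Set V)))
    (hind : ∀ u ∈ S, ∀ v ∈ S, ¬ Chat.Adj u v)
    (hadj : ∀ x ∈ S, (V₁.filter (fun u => Chat.Adj x u)).card = 1 ∧
        (V₂.filter (fun u => Chat.Adj x u)).card = 1 ∧
        (V₃.filter (fun u => Chat.Adj x u)).card = 1)
    (P : V → Finset V)
    (hP : ∀ v ∈ Sᶜ, (Finset.univ.filter (fun w => Chat.Adj v w)).card = 2 →
        v ∈ P v ∧ P v ⊆ Sᶜ ∧ IsPathGraph (Chat.induce (↑(P v) : Set V)) ∧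
        (∀ u ∈ P v, ((P v).filter (fun w => Chat.Adj u w)).card ≤ 1 →
          (Finset.univ.filter (fun w => Chat.Adj u w)).card = 3) ∧
        (∀ u ∈ P v, 2 ≤ ((P v).filter (fun w => Chat.Adj u w)).card →
          (Finset.univ.filter (fun w => Chat.Adj u w)).card = 2))
    (Ctil : SimpleGraph V)
    (hle : Chat ≤ Ctil)
    (hnew : ∀ v ∈ Sᶜ, (Finset.univ.filter (fun w => Chat.Adj v w)).card = 2 →
        ∃ u, u ∉ P v ∧ Ctil.Adj v u)
    (honly : ∀ a b, Ctil.Adj a b → ¬ Chat.Adj a b →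
        (a ∈ Sᶜ ∧ (Finset.univ.filter (fun w => Chat.Adj a w)).card = 2 ∧ b ∉ P a) ∨
        (b ∈ Sᶜ ∧ (Finset.univ.filter (fun w => Chat.Adj b w)).card = 2 ∧ a ∉ P b)) :
    IsKConnected 3 Ctil := by
  have hV1 : ∀ x ∈ V₁, x ∉ S := fun x hx => by
    rw [← Finset.mem_compl, ← hpart]; simp [hx]
  have hV2 : ∀ x ∈ V₂, x ∉ S := fun x hx => by
    rw [← Finset.mem_compl, ← hpart]; simp [hx]
  have hV3 : ∀ x ∈ V₃, x ∉ S := fun x hx => by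
    rw [← Finset.mem_compl, ← hpart]; simp [hx]
  have hcard : 3 + 1 ≤ Fintype.card V := by
    have h1 := Finset.card_add_card_compl S
    rw [← hpart, Finset.card_union_of_disjoint (Finset.disjoint_union_left.2 ⟨h13, h23⟩),
      Finset.card_union_of_disjoint h12] at h1
    have := hne1.card_pos
    have := hne2.card_pos
    have := hne3.card_pos
    have := hSne.card_pos
    omega
  refine ⟨hcard, ?_⟩
  intro T hT
  replace hT : T.card ≤ 2 := hT
  have hC2 : ∀ v, v ∉ S → (Sᶜ.filter (fun w => Chat.Adj v w)).card = 2 := by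
    intro v hv
    rw [← aux_cycle_deg hcycle ⟨v, by simpa using hv⟩, ← Set.ncard_coe_finset,
      ← Set.ncard_image_of_injective _ Subtype.val_injective]
    congr 1
    ext z
    simp only [Finset.coe_filter, Finset.mem_compl, Set.mem_image, Set.mem_setOf_eq,
      SimpleGraph.mem_neighborSet, Subtype.exists, SimpleGraph.comap_adj]
    constructor
    · rintro ⟨h1, h2⟩
      exact ⟨z, by simpa using h1, h2, rfl⟩
    · rintro ⟨z', h1, h2, rfl⟩
      exact ⟨by simpa using h1, h2⟩
  have hC0 : ∀ (X : Set V) (x y : V), x ∈ X → x ∉ S → y ∉ S →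
      (∀ a ∈ X, a ∉ S → ∀ b, b ∉ S → Chat.Adj a b → b ∈ X) → y ∈ X := by
    intro X x y hx hxS hyS hcl
    refine aux_closed (aux_cycle_pre hcycle) (Subtype.val ⁻¹' X) ?_
      (x := ⟨x, by simpa using hxS⟩) (y := ⟨y, by simpa using hyS⟩) hx
    rintro ⟨a, ha⟩ haX ⟨b, hb⟩ hab
    exact hcl a haX (by simpa using ha) b (by simpa using hb) hab
  have hC1 : ∀ (t : V) (X : Set V) (x y : V), x ∈ X → x ∉ S → x ≠ t → y ∉ S → y ≠ t →
      (∀ a ∈ X, a ∉ S → a ≠ t → ∀ b, b ∉ S → b ≠ t → Chat.Adj a b → b ∈ X) → y ∈ X := by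
    intro t X x y hx hxS hxt hyS hyt hcl
    by_cases htS : t ∈ S
    · refine hC0 X x y hx hxS hyS ?_
      intro a ha haS b hbS hab
      exact hcl a ha haS (by rintro rfl; exact haS htS) b hbS (by rintro rfl; exact hbS htS) hab
    · refine aux_cycle_del hcycle ⟨t, by simpa using htS⟩ (Subtype.val ⁻¹' X) ?_
        (x := ⟨x, by simpa using hxS⟩) (y := ⟨y, by simpa using hyS⟩) hx
        (fun h => hxt (congrArg Subtype.val h)) (fun h => hyt (congrArg Subtype.val h))
      rintro ⟨a, ha⟩ haX hat ⟨b, hb⟩ hbt hab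
      exact hcl a haX (by simpa using ha) (fun h => hat (Subtype.ext h)) b (by simpa using hb)
        (fun h => hbt (Subtype.ext h)) hab
  have hP' : ∀ v ∈ Sᶜ, (Finset.univ.filter (fun w => Chat.Adj v w)).card = 2 →
        v ∈ P v ∧
        (∀ u ∈ P v, ((P v).filter (fun w => Chat.Adj u w)).card ≤ 1 →
          (Finset.univ.filter (fun w => Chat.Adj u w)).card = 3) :=
    fun v hv h => ⟨(hP v hv h).1, (hP v hv h).2.2.2.1⟩
  have hex : ∀ (W : Finset V) (x : V), (W.filter (fun u => Chat.Adj x u)).card = 1 →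
      ∃ u ∈ W, Chat.Adj x u := by
    intro W x h
    obtain ⟨u, hu⟩ := Finset.card_pos.1 (by omega : 0 < (W.filter (fun u => Chat.Adj x u)).card)
    exact ⟨u, (Finset.mem_filter.1 hu).1, (Finset.mem_filter.1 hu).2⟩
  obtain ⟨K, hKne, hKS, hKT, hKpath, hK⟩ : ∃ K : Finset V, K.Nonempty ∧ (∀ x ∈ K, x ∉ S) ∧
      (∀ x ∈ K, x ∉ T) ∧ IsPathGraph (Chat.induce (↑K : Set V)) ∧
      (∀ s ∈ S, ∃ u ∈ K, Chat.Adj s u) := by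
    by_cases h1 : ∀ x ∈ V₁, x ∉ T
    · exact ⟨V₁, hne1, hV1, h1, hpath1, fun s hs => hex _ _ (hadj s hs).1⟩
    by_cases h2 : ∀ x ∈ V₂, x ∉ T
    · exact ⟨V₂, hne2, hV2, h2, hpath2, fun s hs => hex _ _ (hadj s hs).2.1⟩
    by_cases h3 : ∀ x ∈ V₃, x ∉ T
    · exact ⟨V₃, hne3, hV3, h3, hpath3, fun s hs => hex _ _ (hadj s hs).2.2⟩
    exfalso
    push Not at h1 h2 h3
    obtain ⟨a, ha, haT⟩ := h1
    obtain ⟨b, hb, hbT⟩ := h2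
    obtain ⟨c, hc, hcT⟩ := h3
    have hab : a ≠ b := by rintro rfl; exact Finset.disjoint_left.1 h12 ha hb
    have hac : a ≠ c := by rintro rfl; exact Finset.disjoint_left.1 h13 ha hc
    have hbc : b ≠ c := by rintro rfl; exact Finset.disjoint_left.1 h23 hb hc
    have h3 : ({a, b, c} : Finset V).card = 3 :=
      Finset.card_eq_three.2 ⟨a, b, c, hab, hac, hbc, rfl⟩
    have hsub : ({a, b, c} : Finset V) ⊆ T := by
      intro z hz
      simp only [Finset.mem_insert, Finset.mem_singleton] at hz
      rcases hz with rfl | rfl | rfl <;> assumption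
    have := Finset.card_le_card hsub
    omega
  have core := aux_core Chat S K hKS hKne hC2 hC1 hC0 hK P hP' Ctil hle hnew T hT
  obtain ⟨k, hk⟩ := hKne
  have hkT : k ∈ ((↑T : Set V)ᶜ) := by simpa using hKT k hk
  -- everything is reachable from `k`
  have main : ∀ z : ((↑T : Set V)ᶜ : Set V),
      (Ctil.induce ((↑T : Set V)ᶜ)).Reachable ⟨k, hkT⟩ z := by
    by_contra hcon
    push Not at hcon
    obtain ⟨⟨z, hz⟩, hzr⟩ := hcon
    let A : Set V := {a | ∃ h : a ∈ ((↑T : Set V)ᶜ),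
      (Ctil.induce ((↑T : Set V)ᶜ)).Reachable ⟨k, hkT⟩ ⟨a, h⟩}
    have hstep : ∀ a ∈ A, ∀ b, b ∉ T → Ctil.Adj a b → b ∈ A := by
      rintro a ⟨haT, har⟩ b hb hab
      refine ⟨by simpa using hb, har.trans (SimpleGraph.Adj.reachable ?_)⟩
      exact hab
    refine core A {b | b ∉ T ∧ b ∉ A} ?_ ?_ ?_ ?_ ?_ ?_ ?_
    · intro x hx
      by_cases h : x ∈ A
      · exact Or.inl h
      · exact Or.inr ⟨hx, h⟩
    · rintro x ⟨h, -⟩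
      simpa using h
    · exact fun x h => h.1
    · exact fun x h h' => h'.2 h
    · exact fun x hx y hy hxy => hy.2 (hstep x hx y hy.1 hxy)
    · exact ⟨z, by simpa using hz, fun ⟨_, h⟩ => hzr h⟩
    · intro x hx
      refine aux_closed (aux_path_pre hKpath) (Subtype.val ⁻¹' A) ?_
        (x := ⟨k, by simpa using hk⟩) (y := ⟨x, by simpa using hx⟩) ⟨hkT, Reachable.refl _⟩
      rintro ⟨a, ha⟩ haA ⟨b, hb⟩ hab
      exact hstep a haA b (hKT b (by simpa using hb)) (hle hab)
  have : Nonempty ((↑T : Set V)ᶜ : Set V) := ⟨⟨k, hkT⟩⟩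
  exact ⟨fun a b => (main a).symm.trans (main b)⟩


end
end

section
/- Let N = ⌊ω^{-3}·n/2⌋ and t₁ = ⌊ω⁵·n⌋. Consider a uniformly random ordering of the edges of K_n and the following deterministic procedure: initialize N paths P₁, …, P_N, where P_j consists of the single vertex w_j, which is also its designated endpoint; at each of the rounds 1, …, t₁, if the proposed edge joins a vertex lying outside all current paths to the designated endpoint of some path P_j, the edge is accepted, the new vertex is appended to P_j and becomes its designated endpoint; otherwise the edge is ignored. Then asymptotically almost surely, after round t₁ the N paths together contain at least (1 − ω^{-1})·n vertices, and at least (1 − 2ω^{-1})·n of these vertices lie in paths containing between ω³ and 3ω³ vertices. -/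
open Filter SimpleGraph
open scoped Classical

noncomputable section

/-- The number of edges of the complete graph on `Fin n`. -/
def numEdges (n : ℕ) : ℕ := Fintype.card ((completeGraph (Fin n)).edgeSet)

/-- A uniformly random ordering of the edges of `K_n` is modelled as a uniformly random
bijection from the edge set of `K_n` to `Fin (numEdges n)`; the edge proposed at the
(0-indexed) round `r` is the preimage of `r`. -/
abbrev EdgeOrdering (n : ℕ) : Type := ((completeGraph (Fin n)).edgeSet) ≃ Fin (numEdges n)

/-- The list `(e_1, …, e_t)` of the first `t` proposed edges, in the order of proposal. -/
def history {n : ℕ} (σ : EdgeOrdering n) (t : ℕ) : List (Sym2 (Fin n)) :=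
  ((List.finRange (numEdges n)).filter (fun (r : Fin (numEdges n)) => decide ((r : ℕ) < t))).map
    (fun r => ((σ.symm r : ((completeGraph (Fin n)).edgeSet)) : Sym2 (Fin n)))

/-- The probability of an event under the uniform measure on a finite type. -/
def Pr {α : Type*} [Fintype α] (P : α → Prop) : ℝ :=
  ((Finset.univ.filter P).card : ℝ) / (Fintype.card α : ℝ)


/-- The initial configuration of the path-building procedure: `N` paths, the `j`-th
(for `j < N`) consisting of the single vertex `w_j`; indices `j ≥ N` carry the empty
list and never take part.  Each path is stored as a list whose head is its designated
endpoint. -/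
def initPaths (n N : ℕ) : Fin n → List (Fin n) :=
  fun j => if (j : ℕ) < N then [j] else []

/-- One round of the path-building procedure: if the proposed edge `e` joins a vertex `u`
lying outside all current paths to the designated endpoint (the head) of the `j`-th path,
then `u` is appended to that path and becomes its designated endpoint; otherwise nothing
happens. -/
def pathStep {n : ℕ} (f : Fin n → List (Fin n)) (e : Sym2 (Fin n)) : Fin n → List (Fin n) :=
  fun j =>
    if h : ∃ u : Fin n, (∀ k, u ∉ f k) ∧ ∃ w, (f j).head? = some w ∧ e = s(u, w) then
      h.choose :: f j
    else f j

/-- The configuration of paths after the procedure has processed the first `t` proposed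
edges of the ordering `σ`, starting from `N` single-vertex paths. -/
def pathsAfter {n : ℕ} (N : ℕ) (σ : EdgeOrdering n) (t : ℕ) : Fin n → List (Fin n) :=
  (history σ t).foldl pathStep (initPaths n N)

lemma numEdges_eq (n : ℕ) : numEdges n = n.choose 2 := by
  have := SimpleGraph.card_edgeFinset_top_eq_card_choose_two (V := Fin n)
  rw [Fintype.card_fin] at this
  rw [← this, numEdges]
  rw [SimpleGraph.edgeFinset, Set.toFinset_card]

lemma history_succ {n : ℕ} (σ : EdgeOrdering n) (t : Fin (numEdges n)) :
    history σ (t + 1) = history σ t ++ [((σ.symm t : ((completeGraph (Fin n)).edgeSet)) : Sym2 (Fin n))] := by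
  unfold history
  have : (List.finRange (numEdges n)).filter (fun (r : Fin (numEdges n)) => decide ((r : ℕ) < t + 1))
      = (List.finRange (numEdges n)).filter (fun (r : Fin (numEdges n)) => decide ((r : ℕ) < t)) ++ [t] := by
    have hs : (List.finRange (numEdges n)).Pairwise (· < ·) := by
      exact List.pairwise_lt_finRange _
    have h1 := hs.filter (fun (r : Fin (numEdges n)) => decide ((r : ℕ) < t + 1))
    have h2 : ((List.finRange (numEdges n)).filter (fun (r : Fin (numEdges n)) => decide ((r : ℕ) < t)) ++ [t]).Pairwise (· < ·) := by
      rw [List.pairwise_append]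
      refine ⟨hs.filter _, by simp, ?_⟩
      intro a ha b hb
      simp at ha hb
      subst hb; exact ha
    refine List.Perm.eq_of_pairwise (le := (· < ·)) ?_ h1 h2 ?_
    · intro a b _ _ h h'
      exact absurd h (not_lt.mpr h'.le)
    · rw [List.perm_ext_iff_of_nodup (h1.imp (fun h => ne_of_lt h)) (h2.imp (fun h => ne_of_lt h))]
      intro a
      simp [Fin.ext_iff]
      omega
  rw [this]; simp

lemma history_congr {n : ℕ} (σ τ : EdgeOrdering n) (t : ℕ)
    (h : ∀ r : Fin (numEdges n), (r : ℕ) < t → σ.symm r = τ.symm r) :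
    history σ t = history τ t := by
  unfold history
  apply List.map_congr_left
  intro r hr
  simp at hr
  rw [h r hr]

lemma pathsAfter_succ {n : ℕ} (N : ℕ) (σ : EdgeOrdering n) (t : Fin (numEdges n)) :
    pathsAfter N σ (t + 1) = pathStep (pathsAfter N σ t) (σ.symm t).1 := by
  unfold pathsAfter
  rw [history_succ, List.foldl_append]; rfl

lemma pathsAfter_zero {n : ℕ} (N : ℕ) (σ : EdgeOrdering n) :
    pathsAfter N σ 0 = initPaths n N := by
  unfold pathsAfter history; simp

structure PInv {n : ℕ} (N : ℕ) (f : Fin n → List (Fin n)) : Prop where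
  nd : ∀ j, (f j).Nodup
  dj : ∀ i j v, v ∈ f i → v ∈ f j → i = j
  ne : ∀ j, f j ≠ [] ↔ (j : ℕ) < N

def outs {n : ℕ} (f : Fin n → List (Fin n)) : Finset (Fin n) :=
  Finset.univ.filter (fun u => ∀ k, u ∉ f k)

lemma mem_outs {n : ℕ} (f : Fin n → List (Fin n)) (u : Fin n) : u ∈ outs f ↔ ∀ k, u ∉ f k := by
  simp [outs]

lemma step_acc {n N : ℕ} {f : Fin n → List (Fin n)} (hI : PInv N f) {u w j : Fin n}
    (hu : u ∈ outs f) (hw : (f j).head? = some w) :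
    pathStep f s(u, w) = Function.update f j (u :: f j) := by
  rw [mem_outs] at hu
  have hwj : w ∈ f j := List.mem_of_mem_head? hw
  funext k
  by_cases hk : k = j
  · subst hk
    have h : ∃ u' : Fin n, (∀ k, u' ∉ f k) ∧ ∃ w', (f k).head? = some w' ∧ s(u, w) = s(u', w') :=
      ⟨u, hu, w, hw, rfl⟩
    have hc : h.choose = u := by
      obtain ⟨h1, w', h2, h3⟩ := h.choose_spec
      rw [Sym2.eq_iff] at h3
      rcases h3 with h3 | h3
      · exact h3.1.symm
      · exact absurd (h3.2 ▸ hwj) (h1 k)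
    simp only [Function.update_self]
    unfold pathStep
    rw [dif_pos h, hc]
  · rw [Function.update_of_ne hk]
    unfold pathStep
    rw [dif_neg]
    rintro ⟨u', hu', w', hw', h3⟩
    have hwk : w' ∈ f k := List.mem_of_mem_head? hw'
    rw [Sym2.eq_iff] at h3
    rcases h3 with h3 | h3
    · exact hk (hI.dj _ _ w' hwk (h3.2 ▸ hwj))
    · exact hu k (h3.1 ▸ hwk)

lemma step_rej {n : ℕ} {f : Fin n → List (Fin n)} {e : Sym2 (Fin n)}
    (h : ¬ ∃ j u w, u ∈ outs f ∧ (f j).head? = some w ∧ e = s(u, w)) :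
    pathStep f e = f := by
  funext j
  unfold pathStep
  rw [dif_neg]
  rintro ⟨u, hu, w, hw, he⟩
  exact h ⟨j, u, w, (mem_outs f u).2 hu, hw, he⟩

lemma PInv.step {n N : ℕ} {f : Fin n → List (Fin n)} (hI : PInv N f) (e : Sym2 (Fin n)) :
    PInv N (pathStep f e) := by
  by_cases h : ∃ j u w, u ∈ outs f ∧ (f j).head? = some w ∧ e = s(u, w)
  · obtain ⟨j, u, w, hu, hw, rfl⟩ := h
    rw [step_acc hI hu hw]
    rw [mem_outs] at hu
    have hm : ∀ i v, v ∈ Function.update f j (u :: f j) i ↔ (v ∈ f i ∨ (i = j ∧ v = u)) := by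
      intro i v
      by_cases hi : i = j
      · subst hi; simp [or_comm]
      · simp [hi]
    refine ⟨?_, ?_, ?_⟩
    · intro i
      by_cases hi : i = j
      · subst hi; simp [hu i, hI.nd i]
      · rw [Function.update_of_ne hi]; exact hI.nd i
    · intro a b v ha hb
      rw [hm] at ha hb
      rcases ha with ha | ha <;> rcases hb with hb | hb
      · exact hI.dj _ _ _ ha hb
      · exact absurd (hb.2 ▸ ha) (hu a)
      · exact absurd (ha.2 ▸ hb) (hu b)
      · rw [ha.1, hb.1]
    · intro i
      by_cases hi : i = j
      · subst hi
        have : f i ≠ [] := by intro h0; rw [h0] at hw; simp at hw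
        simp [(hI.ne i).1 this]
      · rw [Function.update_of_ne hi]; exact hI.ne i
  · rw [step_rej h]; exact hI

lemma PInv.init (n N : ℕ) : PInv N (initPaths n N) := by
  refine ⟨?_, ?_, ?_⟩
  · intro j; unfold initPaths; split_ifs <;> simp
  · intro i j v hi hj
    unfold initPaths at hi hj
    split_ifs at hi hj <;> simp_all
  · intro j; unfold initPaths; split_ifs <;> simp_all

lemma pinv_foldl {n N : ℕ} (l : List (Sym2 (Fin n))) : ∀ f : Fin n → List (Fin n), PInv N f →
    PInv N (l.foldl pathStep f) := by
  induction l with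
  | nil => intro f h; exact h
  | cons a l ih => intro f h; exact ih _ (h.step a)

lemma pinv_pathsAfter {n : ℕ} (N : ℕ) (σ : EdgeOrdering n) (t : ℕ) : PInv N (pathsAfter N σ t) :=
  pinv_foldl _ _ (PInv.init n N)

def Yv {n : ℕ} (f : Fin n → List (Fin n)) : ℝ := ∑ j, ((f j).length : ℝ)
def Sv {n : ℕ} (f : Fin n → List (Fin n)) : ℝ := ∑ j, ((f j).length : ℝ) ^ 2

/-- vertices in paths satisfying a predicate -/
lemma card_cov {n N : ℕ} {f : Fin n → List (Fin n)} (hI : PInv N f) (P : Fin n → Prop) :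
    ((Finset.univ.filter (fun v : Fin n => ∃ j, v ∈ f j ∧ P j)).card : ℝ) =
      ∑ j ∈ Finset.univ.filter P, ((f j).length : ℝ) := by
  have : (Finset.univ.filter (fun v : Fin n => ∃ j, v ∈ f j ∧ P j)) =
      (Finset.univ.filter P).biUnion (fun j => (f j).toFinset) := by
    ext v; simp [and_comm]
  rw [this, Finset.card_biUnion]
  · push_cast
    apply Finset.sum_congr rfl
    intro j _
    rw [List.toFinset_card_of_nodup (hI.nd j)]
  · intro i _ j _ hij
    show Disjoint _ _
    rw [Finset.disjoint_left]
    intro v h1 h2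
    exact hij (hI.dj i j v (by simpa using h1) (by simpa using h2))

lemma card_cov' {n N : ℕ} {f : Fin n → List (Fin n)} (hI : PInv N f) :
    ((Finset.univ.filter (fun v : Fin n => ∃ j, v ∈ f j)).card : ℝ) = Yv f := by
  have := card_cov hI (fun _ => True)
  simpa [Yv] using this

lemma card_outs {n N : ℕ} {f : Fin n → List (Fin n)} (hI : PInv N f) :
    ((outs f).card : ℝ) = n - Yv f := by
  rw [← card_cov' hI]
  have := Finset.card_filter_add_card_filter_not (s := (Finset.univ : Finset (Fin n))) (fun v : Fin n => ∃ j, v ∈ f j)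
  have h2 : Finset.univ.filter (fun v : Fin n => ¬ ∃ j, v ∈ f j) = outs f := by
    ext v; simp [outs]
  rw [h2] at this
  simp only [Finset.card_univ, Fintype.card_fin] at this
  have h3 : (n : ℝ) = _ := congrArg (Nat.cast (R := ℝ)) this.symm
  push_cast at h3
  linarith

lemma Yv_update {n : ℕ} (f : Fin n → List (Fin n)) (j u : Fin n) :
    Yv (Function.update f j (u :: f j)) = Yv f + 1 := by
  have : ∀ i, (((Function.update f j (u :: f j)) i).length : ℝ) = (f i).length + if i = j then 1 else 0 := by
    intro i
    by_cases hi : i = j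
    · subst hi; simp
    · simp [hi]
  simp [Yv, this, Finset.sum_add_distrib]

lemma Sv_update {n : ℕ} (f : Fin n → List (Fin n)) (j u : Fin n) :
    Sv (Function.update f j (u :: f j)) = Sv f + (2 * (f j).length + 1) := by
  have : ∀ i, (((Function.update f j (u :: f j)) i).length : ℝ) ^ 2 = ((f i).length : ℝ) ^ 2 + if i = j then (2 * (f j).length + 1 : ℝ) else 0 := by
    intro i
    by_cases hi : i = j
    · subst hi; simp; ring
    · simp [hi]
  simp [Sv, this, Finset.sum_add_distrib]

lemma sum_step {n N : ℕ} (hN : N ≤ n) {f : Fin n → List (Fin n)} (hI : PInv N f)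
    (σ : EdgeOrdering n) (t : ℕ) :
    ∃ B ⊆ (Finset.univ.filter (fun j : Fin n => (j : ℕ) < N)) ×ˢ outs f,
      (N : ℝ) * (n - Yv f) - t ≤ B.card ∧
      ∀ (Ψ : (Fin n → List (Fin n)) → ℝ) (d : Fin n → ℝ),
        (∀ j u, Ψ (Function.update f j (u :: f j)) = Ψ f + d j) →
        ∑ s ∈ Finset.univ.filter (fun s : Fin (numEdges n) => t ≤ (s : ℕ)),
          (Ψ (pathStep f (σ.symm s).1) - Ψ f) = ∑ p ∈ B, d p.1 := by
  set J := Finset.univ.filter (fun j : Fin n => (j : ℕ) < N) with hJ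
  set T := Finset.univ.filter (fun s : Fin (numEdges n) => t ≤ (s : ℕ)) with hT
  set g : Fin (numEdges n) → Sym2 (Fin n) := fun s => (σ.symm s).1 with hg
  have hginj : Function.Injective g := fun a b h => σ.symm.injective (Subtype.ext h)
  set e : Fin n × Fin n → Sym2 (Fin n) := fun p => s(p.2, (f p.1).head?.getD p.2) with he
  have hhead : ∀ j ∈ J, ∃ w, (f j).head? = some w ∧ w ∈ f j := by
    intro j hj
    have hj' : f j ≠ [] := (hI.ne j).2 (by simpa [hJ] using hj)
    obtain ⟨w, l, hl⟩ := List.exists_cons_of_ne_nil hj'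
    exact ⟨w, by rw [hl]; rfl, by rw [hl]; simp⟩
  have hJcard : J.card = N := by
    rw [hJ, Fin.card_filter_val_lt]; simp [hN]
  have heinj : Set.InjOn e ((J ×ˢ outs f : Finset _) : Set (Fin n × Fin n)) := by
    rintro ⟨j, u⟩ hp ⟨k, v⟩ hq h
    simp only [Finset.coe_product, Set.mem_prod, Finset.mem_coe] at hp hq
    obtain ⟨w, hw, hwj⟩ := hhead j hp.1
    obtain ⟨x, hx, hxk⟩ := hhead k hq.1
    have hu := (mem_outs f u).1 hp.2
    have hv := (mem_outs f v).1 hq.2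
    simp only [he, hw, hx, Option.getD_some, Sym2.eq_iff] at h
    rcases h with h | h
    · have := hI.dj j k w hwj (h.2 ▸ hxk)
      rw [this, h.1]
    · exact absurd (h.1 ▸ hxk) (hu k)
  have hmem : ∀ p ∈ J ×ˢ outs f, ∃ s, g s = e p := by
    rintro ⟨j, u⟩ hp
    rw [Finset.mem_product] at hp
    obtain ⟨w, hw, hwj⟩ := hhead j hp.1
    have hu := (mem_outs f u).1 hp.2
    have hne : u ≠ w := fun h => hu j (h ▸ hwj)
    have hE : e (j, u) ∈ (completeGraph (Fin n)).edgeSet := by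
      simp only [he, hw, Option.getD_some]
      simpa [SimpleGraph.mem_edgeSet] using hne
    exact ⟨σ ⟨e (j, u), hE⟩, by simp [hg]⟩
  refine ⟨(J ×ˢ outs f).filter (fun p => e p ∈ T.image g), Finset.filter_subset _ _, ?_, ?_⟩
  · have h1 := Finset.card_filter_add_card_filter_not (s := J ×ˢ outs f) (fun p => e p ∈ T.image g)
    have h2 : ((J ×ˢ outs f).filter (fun p => ¬ e p ∈ T.image g)).card ≤ t := by
      rw [← Finset.card_image_of_injOn (f := e)
        (heinj.mono (by exact_mod_cast Finset.filter_subset _ _))]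
      calc _ ≤ ((Finset.univ.filter (fun s : Fin (numEdges n) => (s : ℕ) < t)).image g).card := by
            apply Finset.card_le_card
            intro x hx
            rw [Finset.mem_image] at hx
            obtain ⟨p, hp, rfl⟩ := hx
            rw [Finset.mem_filter] at hp
            obtain ⟨s, hs⟩ := hmem p hp.1
            rw [Finset.mem_image]
            refine ⟨s, ?_, hs⟩
            simp only [Finset.mem_filter, Finset.mem_univ, true_and]
            by_contra hst
            apply hp.2
            rw [Finset.mem_image]
            exact ⟨s, by simp [hT]; omega, hs⟩
        _ ≤ (Finset.univ.filter (fun s : Fin (numEdges n) => (s : ℕ) < t)).card := Finset.card_image_le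
        _ ≤ t := by
            rw [Fin.card_filter_val_lt]; exact min_le_right _ _
    rw [Finset.card_product, hJcard] at h1
    have h3 := congrArg (Nat.cast (R := ℝ)) h1.symm
    push_cast at h3
    have h2' : (((J ×ˢ outs f).filter (fun p => ¬ e p ∈ T.image g)).card : ℝ) ≤ t := by exact_mod_cast h2
    rw [← card_outs hI, h3]
    linarith
  · intro Ψ d hd
    have e1 : ∑ s ∈ T, (Ψ (pathStep f (σ.symm s).1) - Ψ f) = ∑ x ∈ T.image g, (Ψ (pathStep f x) - Ψ f) := by
      rw [Finset.sum_image (hginj.injOn)]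
    have e2 : ∑ p ∈ (J ×ˢ outs f).filter (fun p => e p ∈ T.image g), d p.1 =
        ∑ x ∈ ((J ×ˢ outs f).filter (fun p => e p ∈ T.image g)).image e, (Ψ (pathStep f x) - Ψ f) := by
      rw [Finset.sum_image (heinj.mono (by exact_mod_cast Finset.filter_subset _ _))]
      apply Finset.sum_congr rfl
      rintro ⟨j, u⟩ hp
      rw [Finset.mem_filter, Finset.mem_product] at hp
      obtain ⟨w, hw, hwj⟩ := hhead j hp.1.1
      have : e (j, u) = s(u, w) := by simp only [he, hw, Option.getD_some]
      rw [this, step_acc hI hp.1.2 hw, hd]; ring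
    rw [e1, e2]
    symm
    apply Finset.sum_subset
    · intro x hx
      rw [Finset.mem_image] at hx
      obtain ⟨p, hp, rfl⟩ := hx
      exact (Finset.mem_filter.1 hp).2
    · intro x hx hx'
      rw [step_rej, sub_self]
      rintro ⟨j, u, w, hu, hw, rfl⟩
      apply hx'
      rw [Finset.mem_image]
      have hjw : e (j, u) = s(u, w) := by simp only [he, hw, Option.getD_some]
      refine ⟨(j, u), ?_, hjw⟩
      rw [Finset.mem_filter, hjw, Finset.mem_product]
      refine ⟨⟨?_, hu⟩, hx⟩
      have : f j ≠ [] := by intro h0; rw [h0] at hw; simp at hw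
      simp [hJ, (hI.ne j).1 this]

lemma exch {n : ℕ} (N : ℕ) (t : Fin (numEdges n)) (Ψ : (Fin n → List (Fin n)) → ℝ) :
    ((numEdges n : ℝ) - (t : ℕ)) * ∑ σ : EdgeOrdering n, (Ψ (pathsAfter N σ (t + 1)) - Ψ (pathsAfter N σ t)) =
    ∑ σ : EdgeOrdering n, ∑ s ∈ Finset.univ.filter (fun s : Fin (numEdges n) => (t : ℕ) ≤ (s : ℕ)),
      (Ψ (pathStep (pathsAfter N σ t) (σ.symm s).1) - Ψ (pathsAfter N σ t)) := by
  rw [Finset.sum_comm]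
  have key : ∀ s ∈ Finset.univ.filter (fun s : Fin (numEdges n) => (t : ℕ) ≤ (s : ℕ)),
      ∑ σ : EdgeOrdering n, (Ψ (pathStep (pathsAfter N σ t) (σ.symm s).1) - Ψ (pathsAfter N σ t)) =
      ∑ σ : EdgeOrdering n, (Ψ (pathsAfter N σ (t + 1)) - Ψ (pathsAfter N σ t)) := by
    intro s hs
    simp only [Finset.mem_filter, Finset.mem_univ, true_and] at hs
    let φ : EdgeOrdering n ≃ EdgeOrdering n :=
      Equiv.equivCongr (Equiv.refl _) (Equiv.swap t s)
    rw [← Equiv.sum_comp φ (fun σ => Ψ (pathsAfter N σ (t + 1)) - Ψ (pathsAfter N σ t))]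
    apply Finset.sum_congr rfl
    intro σ _
    have hsym : ∀ r, (φ σ).symm r = σ.symm (Equiv.swap t s r) := by
      intro r
      simp [φ, Equiv.equivCongr]
    have hp : pathsAfter N (φ σ) t = pathsAfter N σ t := by
      unfold pathsAfter
      rw [history_congr (φ σ) σ t]
      intro r hr
      rw [hsym, Equiv.swap_apply_of_ne_of_ne]
      · rintro rfl; omega
      · rintro rfl; omega
    rw [pathsAfter_succ, hp, hsym, Equiv.swap_apply_left]
  rw [Finset.sum_congr rfl key, Finset.sum_const, nsmul_eq_mul]
  congr 1
  have h1 := Finset.card_filter_add_card_filter_not (s := (Finset.univ : Finset (Fin (numEdges n)))) (fun s => (s : ℕ) < (t : ℕ))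
  rw [Fin.card_filter_val_lt, min_eq_right t.2.le, Finset.card_univ, Fintype.card_fin] at h1
  simp only [not_lt] at h1
  have h3 : (numEdges n : ℝ) = _ := congrArg (Nat.cast (R := ℝ)) h1.symm
  push_cast at h3
  rw [h3]; ring

lemma Yv_le {n N : ℕ} {f : Fin n → List (Fin n)} (hI : PInv N f) : Yv f ≤ n := by
  have := card_outs hI
  have h0 : (0 : ℝ) ≤ (outs f).card := Nat.cast_nonneg _
  linarith

lemma Yv_nonneg {n : ℕ} (f : Fin n → List (Fin n)) : 0 ≤ Yv f :=
  Finset.sum_nonneg (fun _ _ => Nat.cast_nonneg _)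

lemma sum_step' {n N : ℕ} (hN : N ≤ n) {f : Fin n → List (Fin n)} (hI : PInv N f)
    (σ : EdgeOrdering n) (t : ℕ) :
    ∃ a : ℝ, 0 ≤ a ∧ (N : ℝ) * (n - Yv f) - t ≤ a ∧
      (∑ s ∈ Finset.univ.filter (fun s : Fin (numEdges n) => t ≤ (s : ℕ)),
          (Yv (pathStep f (σ.symm s).1) - Yv f) = a) ∧
      (∑ s ∈ Finset.univ.filter (fun s : Fin (numEdges n) => t ≤ (s : ℕ)),
          ((Sv (pathStep f (σ.symm s).1) - Yv (pathStep f (σ.symm s).1) ^ 2 / N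
            - Yv (pathStep f (σ.symm s).1)) - (Sv f - Yv f ^ 2 / N - Yv f)) ≤
          (n - Yv f) * (2 * Yv f + N) - a * ((2 * Yv f + 1) / N + 1)) := by
  obtain ⟨B, hB, hc, hs⟩ := sum_step hN hI σ t
  refine ⟨B.card, Nat.cast_nonneg _, hc, ?_, ?_⟩
  · rw [hs Yv (fun _ => 1) (fun j u => Yv_update f j u)]; simp
  · rw [hs (fun f => Sv f - Yv f ^ 2 / N - Yv f)
      (fun j => (2 * (f j).length + 1) - ((2 * Yv f + 1) / N + 1))
      (fun j u => by simp only [Sv_update, Yv_update]; ring)]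
    rw [Finset.sum_sub_distrib, Finset.sum_const, nsmul_eq_mul]
    gcongr
    calc _ ≤ ∑ p ∈ (Finset.univ.filter (fun j : Fin n => (j : ℕ) < N)) ×ˢ outs f,
          (2 * ((f p.1).length : ℝ) + 1) := by
            apply Finset.sum_le_sum_of_subset_of_nonneg hB
            intros; positivity
      _ = (n - Yv f) * (2 * Yv f + N) := by
            rw [Finset.sum_product]
            simp only [Finset.sum_const, nsmul_eq_mul]
            rw [← Finset.mul_sum, card_outs hI]
            congr 1
            rw [Finset.sum_add_distrib, ← Finset.mul_sum]
            congr 1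
            · congr 1
              unfold Yv
              apply Finset.sum_subset (Finset.subset_univ _)
              intro j _ hj
              have : ¬ f j ≠ [] := by rw [hI.ne j]; simpa using hj
              push Not at this
              simp [this]
            · rw [Finset.sum_const, Fin.card_filter_val_lt]; simp [hN]

lemma stepX {n N : ℕ} (hN : N ≤ n) (t : Fin (numEdges n)) (t1 : ℕ) (ht : (t : ℕ) ≤ t1) :
    (∑ σ : EdgeOrdering n, ((n : ℝ) - Yv (pathsAfter N σ (t + 1))) ≤ ∑ σ : EdgeOrdering n, ((n : ℝ) - Yv (pathsAfter N σ t))) ∧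
    (numEdges n : ℝ) * ∑ σ : EdgeOrdering n, ((n : ℝ) - Yv (pathsAfter N σ (t + 1))) ≤
      (numEdges n : ℝ) * ∑ σ : EdgeOrdering n, ((n : ℝ) - Yv (pathsAfter N σ t)) -
      (N * ∑ σ : EdgeOrdering n, ((n : ℝ) - Yv (pathsAfter N σ t)) - Fintype.card (EdgeOrdering n) * t1) := by
  have h := exch N t Yv
  choose a ha0 ha1 ha2 _ using fun σ : EdgeOrdering n => sum_step' hN (pinv_pathsAfter N σ t) σ t
  rw [Finset.sum_congr rfl (fun σ _ => ha2 σ)] at h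
  have htM : ((t : ℕ) : ℝ) < numEdges n := by exact_mod_cast t.2
  have hA0 : 0 ≤ ∑ σ, a σ := Finset.sum_nonneg (fun σ _ => ha0 σ)
  have hA1 : N * ∑ σ : EdgeOrdering n, ((n : ℝ) - Yv (pathsAfter N σ t)) - Fintype.card (EdgeOrdering n) * t1 ≤ ∑ σ, a σ := by
    rw [Finset.mul_sum]
    have : (Fintype.card (EdgeOrdering n) : ℝ) * t1 = ∑ σ : EdgeOrdering n, (t1 : ℝ) := by simp
    rw [this, ← Finset.sum_sub_distrib]
    apply Finset.sum_le_sum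
    intro σ _
    have : ((t : ℕ) : ℝ) ≤ t1 := by exact_mod_cast ht
    linarith [ha1 σ]
  set D := ∑ σ : EdgeOrdering n, (Yv (pathsAfter N σ (t + 1)) - Yv (pathsAfter N σ t)) with hD
  have hD' : ∑ σ : EdgeOrdering n, ((n : ℝ) - Yv (pathsAfter N σ (t + 1))) = ∑ σ : EdgeOrdering n, ((n : ℝ) - Yv (pathsAfter N σ t)) - D := by
    rw [hD, ← Finset.sum_sub_distrib]
    apply Finset.sum_congr rfl; intros; ring
  have hD0 : 0 ≤ D := by
    by_contra hneg
    push Not at hneg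
    nlinarith
  have ht0 : (0 : ℝ) ≤ ((t : ℕ) : ℝ) := Nat.cast_nonneg _
  rw [hD']
  constructor
  · linarith
  · nlinarith

lemma stepV {n N : ℕ} (hN : N ≤ n) (hN0 : 0 < N) (t : Fin (numEdges n)) (t1 : ℕ) (ht : (t : ℕ) ≤ t1)
    (ht1 : t1 < numEdges n) :
    ∑ σ : EdgeOrdering n, (Sv (pathsAfter N σ (t + 1)) - Yv (pathsAfter N σ (t + 1)) ^ 2 / N - Yv (pathsAfter N σ (t + 1))) ≤
    ∑ σ : EdgeOrdering n, (Sv (pathsAfter N σ t) - Yv (pathsAfter N σ t) ^ 2 / N - Yv (pathsAfter N σ t)) +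
     Fintype.card (EdgeOrdering n) * (t1 * ((2 * n + 1) / N + 1) / (numEdges n - t1)) := by
  have h := exch N t (fun f => Sv f - Yv f ^ 2 / N - Yv f)
  choose a ha0 ha1 _ ha2 using fun σ : EdgeOrdering n => sum_step' hN (pinv_pathsAfter N σ t) σ t
  have hb : ∀ σ : EdgeOrdering n, (n - Yv (pathsAfter N σ t)) * (2 * Yv (pathsAfter N σ t) + N) - a σ * ((2 * Yv (pathsAfter N σ t) + 1) / N + 1) ≤
      t1 * ((2 * n + 1) / N + 1) := by
    intro σ
    have h1 := ha1 σ
    have hy0 := Yv_nonneg (pathsAfter N σ t)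
    have hy1 := Yv_le (pinv_pathsAfter N σ t)
    set y := Yv (pathsAfter N σ t)
    have hNr : (0 : ℝ) < N := by exact_mod_cast hN0
    have htr : ((t : ℕ) : ℝ) ≤ t1 := by exact_mod_cast ht
    have ht0 : (0 : ℝ) ≤ ((t : ℕ) : ℝ) := Nat.cast_nonneg _
    have hc : 0 ≤ (2 * y + 1) / N + 1 := by positivity
    have e1 : (N * (n - y) - (t : ℕ)) * ((2 * y + 1) / N + 1) ≤ a σ * ((2 * y + 1) / N + 1) :=
      mul_le_mul_of_nonneg_right h1 hc
    have e2 : (N * (n - y)) * ((2 * y + 1) / N + 1) = (n - y) * (2 * y + 1 + N) := by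
      field_simp
    have e3 : ((t : ℕ) : ℝ) * ((2 * y + 1) / N + 1) ≤ t1 * ((2 * n + 1) / N + 1) := by
      gcongr
    nlinarith
  have hs : ((numEdges n : ℝ) - (t : ℕ)) * ∑ σ : EdgeOrdering n, ((Sv (pathsAfter N σ (t + 1)) - Yv (pathsAfter N σ (t + 1)) ^ 2 / N - Yv (pathsAfter N σ (t + 1))) - (Sv (pathsAfter N σ t) - Yv (pathsAfter N σ t) ^ 2 / N - Yv (pathsAfter N σ t)))
      ≤ Fintype.card (EdgeOrdering n) * (t1 * ((2 * n + 1) / N + 1)) := by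
    rw [h]
    calc _ ≤ ∑ σ : EdgeOrdering n, ((t1 : ℝ) * ((2 * n + 1) / N + 1)) :=
          Finset.sum_le_sum (fun σ _ => (ha2 σ).trans (hb σ))
      _ = _ := by rw [Finset.sum_const, nsmul_eq_mul, Finset.card_univ]
  rw [Finset.sum_sub_distrib] at hs
  have htr : ((t : ℕ) : ℝ) ≤ t1 := by exact_mod_cast ht
  have htM : (t1 : ℝ) < numEdges n := by exact_mod_cast ht1
  have hpos : (0 : ℝ) < numEdges n - (t : ℕ) := by linarith
  rw [mul_comm, ← le_div_iff₀ hpos] at hs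
  have : (Fintype.card (EdgeOrdering n) : ℝ) * (t1 * ((2 * n + 1) / N + 1)) / (numEdges n - (t : ℕ)) ≤
      Fintype.card (EdgeOrdering n) * (t1 * ((2 * n + 1) / N + 1) / (numEdges n - t1)) := by
    rw [← mul_div_assoc]
    have : (0 : ℝ) < numEdges n - t1 := by linarith
    gcongr
  linarith

lemma init_sums {n N : ℕ} (hN : N ≤ n) :
    Yv (initPaths n N) = N ∧ Sv (initPaths n N) = N := by
  have h : ∀ j : Fin n, ((initPaths n N j).length : ℝ) = if (j : ℕ) < N then 1 else 0 := by
    intro j; unfold initPaths; split_ifs <;> simp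
  have hc : (Finset.univ.filter (fun j : Fin n => (j : ℕ) < N)).card = N := by
    rw [Fin.card_filter_val_lt]; simp [hN]
  constructor
  · simp only [Yv, h]
    rw [Finset.sum_boole, hc]
  · have h2 : ∀ j : Fin n, ((initPaths n N j).length : ℝ) ^ 2 = if (j : ℕ) < N then 1 else 0 := by
      intro j; rw [h]; split_ifs <;> simp
    simp only [Sv, h2]
    rw [Finset.sum_boole, hc]

lemma boundX {n N : ℕ} (hN : N ≤ n) (t1 : ℕ) (ht1 : t1 < numEdges n) (t : ℕ) (ht : t ≤ t1) :
    (numEdges n : ℝ) * ∑ σ : EdgeOrdering n, ((n : ℝ) - Yv (pathsAfter N σ t)) +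
      t * (N * ∑ σ : EdgeOrdering n, ((n : ℝ) - Yv (pathsAfter N σ t)) - Fintype.card (EdgeOrdering n) * t1)
      ≤ numEdges n * (n * Fintype.card (EdgeOrdering n)) := by
  induction t with
  | zero =>
    simp only [Nat.cast_zero, zero_mul, add_zero]
    gcongr
    calc _ ≤ ∑ σ : EdgeOrdering n, (n : ℝ) := by
          apply Finset.sum_le_sum
          intro σ _
          linarith [Yv_nonneg (pathsAfter N σ 0)]
      _ = _ := by simp [mul_comm]
  | succ t ih =>
    have ih := ih (by omega)
    obtain ⟨h1, h2⟩ := stepX hN ⟨t, by omega⟩ t1 (show t ≤ t1 by omega)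
    simp only at h1 h2
    set x' := ∑ σ : EdgeOrdering n, ((n : ℝ) - Yv (pathsAfter N σ (t + 1)))
    set x := ∑ σ : EdgeOrdering n, ((n : ℝ) - Yv (pathsAfter N σ t))
    have h3 : ((t : ℝ) + 1) * (N * x') ≤ (t + 1) * (N * x) := by gcongr
    push_cast
    linarith

lemma boundV {n N : ℕ} (hN : N ≤ n) (hN0 : 0 < N) (t1 : ℕ) (ht1 : t1 < numEdges n) (t : ℕ) (ht : t ≤ t1) :
    ∑ σ : EdgeOrdering n, (Sv (pathsAfter N σ t) - Yv (pathsAfter N σ t) ^ 2 / N - Yv (pathsAfter N σ t)) ≤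
     t * (Fintype.card (EdgeOrdering n) * (t1 * ((2 * n + 1) / N + 1) / (numEdges n - t1))) := by
  induction t with
  | zero =>
    simp only [Nat.cast_zero, zero_mul]
    apply Finset.sum_nonpos
    intro σ _
    rw [pathsAfter_zero, (init_sums hN).1, (init_sums hN).2]
    have : (0 : ℝ) ≤ (N : ℝ) ^ 2 / N := by positivity
    linarith
  | succ t ih =>
    have ih := ih (by omega)
    have h2 := stepV hN hN0 ⟨t, by omega⟩ t1 (show t ≤ t1 by omega) ht1
    simp only at h2
    push_cast
    linarith

lemma V_eq {n N : ℕ} (hN : N ≤ n) (hN0 : 0 < N) {f : Fin n → List (Fin n)} (hI : PInv N f) :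
    ∑ j ∈ Finset.univ.filter (fun j : Fin n => (j : ℕ) < N), (((f j).length : ℝ) - Yv f / N) ^ 2
      = Sv f - Yv f ^ 2 / N := by
  have hl : ∀ j : Fin n, ¬ (j : ℕ) < N → (f j).length = 0 := by
    intro j hj
    have : ¬ f j ≠ [] := by rw [hI.ne j]; exact hj
    push Not at this
    simp [this]
  have hY : Yv f = ∑ j ∈ Finset.univ.filter (fun j : Fin n => (j : ℕ) < N), ((f j).length : ℝ) := by
    symm
    apply Finset.sum_subset (Finset.subset_univ _)
    intro j _ hj
    simp [hl j (by simpa using hj)]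
  have hS : Sv f = ∑ j ∈ Finset.univ.filter (fun j : Fin n => (j : ℕ) < N), ((f j).length : ℝ) ^ 2 := by
    symm
    apply Finset.sum_subset (Finset.subset_univ _)
    intro j _ hj
    simp [hl j (by simpa using hj)]
  have hNr : (N : ℝ) ≠ 0 := by positivity
  have : ∀ j, (((f j).length : ℝ) - Yv f / N) ^ 2 = ((f j).length : ℝ) ^ 2 - 2 * (Yv f / N) * (f j).length + (Yv f / N) ^ 2 := by
    intro j; ring
  simp only [this]
  rw [Finset.sum_add_distrib, Finset.sum_sub_distrib, ← Finset.mul_sum, ← hY, ← hS, Finset.sum_const,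
    Fin.card_filter_val_lt, min_eq_right hN, nsmul_eq_mul]
  field_simp
  ring

lemma determ {n N : ℕ} (hN : N ≤ n) (hN0 : 0 < N) {f : Fin n → List (Fin n)} (hI : PInv N f)
    (w : ℝ) (hw : 12 ≤ w) (h1 : 2 * w ^ 3 * N ≤ n) (h2 : (n : ℝ) ≤ 2.2 * w ^ 3 * N)
    (hX : (n - Yv f) * (8 * w) ≤ n) (hV : Sv f - Yv f ^ 2 / N ≤ w * n) :
    (1 - w⁻¹) * n ≤
        ((Finset.univ.filter (fun v : Fin n => ∃ j, v ∈ f j)).card : ℝ) ∧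
      (1 - 2 * w⁻¹) * n ≤
        ((Finset.univ.filter (fun v : Fin n =>
          ∃ j, v ∈ f j ∧ w ^ 3 ≤ ((f j).length : ℝ) ∧ ((f j).length : ℝ) ≤ 3 * w ^ 3)).card : ℝ) := by
  have hw0 : 0 < w := by linarith
  have hn0 : (0 : ℝ) ≤ n := Nat.cast_nonneg _
  have hXw : (n : ℝ) - Yv f ≤ w⁻¹ * n / 8 := by
    have : (n - Yv f) ≤ n / (8 * w) := by rw [le_div_iff₀ (by positivity)]; exact hX
    calc _ ≤ _ := this
      _ = _ := by field_simp
  have hinv0 : 0 < w⁻¹ := by positivity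
  have hwn : 0 ≤ w⁻¹ * n := by positivity
  rw [card_cov' hI]
  refine ⟨by linarith, ?_⟩
  obtain ⟨P, hP⟩ : ∃ P : Fin n → Prop, P = fun j => w ^ 3 ≤ ((f j).length : ℝ) ∧ ((f j).length : ℝ) ≤ 3 * w ^ 3 := ⟨_, rfl⟩
  refine le_trans ?_ (le_of_eq (Eq.trans (card_cov hI P).symm (by subst hP; congr!)))
  have hsplit := Finset.sum_filter_add_sum_filter_not Finset.univ P (fun j => ((f j).length : ℝ))
  set q := w ^ 3 with hq
  have hq0 : 0 < q := by positivity
  have hNr : (0 : ℝ) < N := by exact_mod_cast hN0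
  have hinv : w⁻¹ ≤ 1 / 12 := by
    rw [inv_eq_one_div]; exact one_div_le_one_div_of_le (by norm_num) hw
  have hYlow : 0.95 * (n : ℝ) ≤ Yv f := by nlinarith
  have hYle := Yv_le hI
  set m := Yv f / N with hm
  have hm1 : 1.9 * q ≤ m := by rw [hm, le_div_iff₀ hNr]; nlinarith
  have hm2 : m ≤ 2.2 * q := by rw [hm, div_le_iff₀ hNr]; nlinarith
  have hbad : ∑ j ∈ Finset.univ.filter (fun j => ¬ P j), ((f j).length : ℝ) ≤ 12 / q * (Sv f - Yv f ^ 2 / N) := by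
    rw [← V_eq hN hN0 hI, Finset.mul_sum, Finset.sum_filter (fun j : Fin n => (j : ℕ) < N)]
    have hnn : ∀ j : Fin n, (0 : ℝ) ≤ if (j : ℕ) < N then 12 / q * (((f j).length : ℝ) - Yv f / N) ^ 2 else 0 := by
      intro j; split_ifs
      · positivity
      · exact le_rfl
    calc _ ≤ ∑ j ∈ Finset.univ.filter (fun j => ¬ P j), (if (j : ℕ) < N then 12 / q * (((f j).length : ℝ) - Yv f / N) ^ 2 else 0) := by
          apply Finset.sum_le_sum
          intro j hj
          simp only [Finset.mem_filter, Finset.mem_univ, true_and] at hj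
          split_ifs with hjN
          · rw [← hm, div_mul_eq_mul_div, le_div_iff₀ hq0]
            set L : ℝ := ((f j).length : ℝ) with hL
            have hL0 : 0 ≤ L := Nat.cast_nonneg _
            have hcase : L < q ∨ 3 * q < L := by
              by_contra hcon
              push Not at hcon
              exact hj (by rw [hP]; exact ⟨hcon.1, hcon.2⟩)
            rcases hcase with h | h
            · have : 0.9 * q ≤ m - L := by linarith
              have h3 : (0.9 * q) ^ 2 ≤ (m - L) ^ 2 := by gcongr
              nlinarith
            · have ha : L - 2.2 * q ≤ L - m := by linarith
              have hb : (L - 2.2 * q) ^ 2 ≤ (L - m) ^ 2 := by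
                have : 0 ≤ L - 2.2 * q := by linarith
                gcongr
              nlinarith
          · have : ¬ f j ≠ [] := by rw [hI.ne j]; exact hjN
            push Not at this
            simp [this]
      _ ≤ _ := Finset.sum_le_sum_of_subset_of_nonneg (Finset.filter_subset _ _) (fun j _ _ => hnn j)
  have hb2 : 12 / q * (Sv f - Yv f ^ 2 / N) ≤ w⁻¹ * n := by
    calc _ ≤ 12 / q * (w * n) := by gcongr
      _ = 12 * w⁻¹ * (w⁻¹ * n) := by rw [hq]; field_simp
      _ ≤ 1 * (w⁻¹ * n) := by gcongr; linarith
      _ = _ := one_mul _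
  have hYd : Yv f = ∑ j, ((f j).length : ℝ) := rfl
  linarith

lemma markov {α : Type*} [Fintype α] [Nonempty α] (P : α → Prop) (Z : α → ℝ) (hZ : ∀ a, 0 ≤ Z a)
    (h : ∀ a, ¬ P a → 1 ≤ Z a) : 1 - (∑ a, Z a) / Fintype.card α ≤ Pr P := by
  have hc : (0 : ℝ) < Fintype.card α := by exact_mod_cast Fintype.card_pos
  unfold Pr
  rw [sub_le_iff_le_add, ← add_div, le_div_iff₀ hc, one_mul]
  have h1 := Finset.card_filter_add_card_filter_not (s := (Finset.univ : Finset α)) P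
  rw [Finset.card_univ] at h1
  have h3 : (Fintype.card α : ℝ) = _ := congrArg (Nat.cast (R := ℝ)) h1.symm
  rw [h3]; push_cast
  gcongr
  calc _ = ∑ a ∈ Finset.univ.filter (fun a => ¬ P a), (1 : ℝ) := by simp
    _ ≤ ∑ a ∈ Finset.univ.filter (fun a => ¬ P a), Z a := by
        apply Finset.sum_le_sum
        intro a ha
        exact h a (by simpa using ha)
    _ ≤ _ := Finset.sum_le_sum_of_subset_of_nonneg (Finset.filter_subset _ _) (fun j _ _ => hZ j)

lemma Pr_le_one {α : Type*} [Fintype α] (P : α → Prop) : Pr P ≤ 1 := by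
  unfold Pr
  apply div_le_one_of_le₀ _ (Nat.cast_nonneg _)
  exact_mod_cast Finset.card_le_univ _

set_option maxHeartbeats 1000000 in
lemma main_bound {n N t1 : ℕ} (w : ℝ) (hw : 12 ≤ w) (hn : w ^ 20 ≤ n)
    (hNle : (N : ℝ) ≤ w⁻¹ ^ 3 * n / 2) (hNge : w⁻¹ ^ 3 * n / 2 < N + 1)
    (htle : (t1 : ℝ) ≤ w ^ 5 * n) (htge : w ^ 5 * n < t1 + 1) :
    1 - 26 / w ≤ Pr (fun σ : EdgeOrdering n => (1 - w⁻¹) * n ≤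
        ((Finset.univ.filter (fun v : Fin n => ∃ j, v ∈ pathsAfter N σ t1 j)).card : ℝ) ∧
      (1 - 2 * w⁻¹) * n ≤
        ((Finset.univ.filter (fun v : Fin n =>
          ∃ j, v ∈ pathsAfter N σ t1 j ∧ w ^ 3 ≤ ((pathsAfter N σ t1 j).length : ℝ) ∧ ((pathsAfter N σ t1 j).length : ℝ) ≤ 3 * w ^ 3)).card : ℝ)) := by
  have hw0 : 0 < w := by linarith
  have hpow : ∀ k : ℕ, k ≤ 19 → 12 * w ^ k ≤ n := by
    intro k hk
    calc 12 * w ^ k ≤ w * w ^ k := by gcongr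
      _ = w ^ (k + 1) := by ring
      _ ≤ w ^ 20 := pow_le_pow_right₀ (by linarith) (by omega)
      _ ≤ n := hn
  have hn12 : (12 : ℝ) ≤ n := by simpa using hpow 0 (by norm_num)
  have hn0 : (0 : ℝ) < n := by linarith
  have hw3 : (1728 : ℝ) ≤ w ^ 3 := by
    have : (12 : ℝ) ^ 3 ≤ w ^ 3 := by gcongr
    linarith
  have h1 : 2 * w ^ 3 * N ≤ n := by
    have : w⁻¹ ^ 3 * n / 2 = n / (2 * w ^ 3) := by field_simp
    rw [this, le_div_iff₀ (by positivity)] at hNle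
    linarith
  have h2' : (n : ℝ) < 2 * w ^ 3 * (N + 1) := by
    have : w⁻¹ ^ 3 * n / 2 = n / (2 * w ^ 3) := by field_simp
    rw [this, div_lt_iff₀ (by positivity)] at hNge
    linarith
  have hw4 : 20 * (12 * w ^ 3) ≤ n := by
    have h := hpow 4 (by norm_num)
    have h19 := hpow 6 (by norm_num)
    have : w ^ 6 = w ^ 3 * w ^ 3 := by ring
    nlinarith
  have h2 : (n : ℝ) ≤ 2.2 * w ^ 3 * N := by linarith
  have hN0 : 0 < N := by
    rcases Nat.eq_zero_or_pos N with h | h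
    · subst h; norm_num at h2; subst h2; norm_num at hn12
    · exact h
  have hNr : (0 : ℝ) < N := by exact_mod_cast hN0
  have hN : N ≤ n := by
    have : (N : ℝ) ≤ n := by nlinarith
    exact_mod_cast this
  have hM : (numEdges n : ℝ) = n * (n - 1) / 2 := by
    rw [numEdges_eq, Nat.cast_choose_two]
  have hMt : (n : ℝ) ^ 2 / 4 ≤ numEdges n - t1 := by
    rw [hM]
    have := hpow 5 (by norm_num)
    nlinarith
  have ht1 : t1 < numEdges n := by
    have : (t1 : ℝ) < numEdges n := by nlinarith
    exact_mod_cast this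
  have ht0 : w ^ 5 * n / 2 ≤ t1 := by
    have : 1 ≤ w ^ 5 := one_le_pow₀ (by linarith)
    nlinarith
  have hne : Nonempty (EdgeOrdering n) := ⟨Fintype.equivFin _⟩
  have hc : (0 : ℝ) < Fintype.card (EdgeOrdering n) := by exact_mod_cast Fintype.card_pos
  have bX := boundX hN t1 ht1 t1 le_rfl
  have bV := boundV hN hN0 t1 ht1 t1 le_rfl
  set c : ℝ := (Fintype.card (EdgeOrdering n) : ℝ) with hcdef
  set x := ∑ σ : EdgeOrdering n, ((n : ℝ) - Yv (pathsAfter N σ t1)) with hx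
  set v := ∑ σ : EdgeOrdering n, (Sv (pathsAfter N σ t1) - Yv (pathsAfter N σ t1) ^ 2 / N) with hv
  have hx0 : 0 ≤ x := Finset.sum_nonneg (fun σ _ => by linarith [Yv_le (pinv_pathsAfter N σ t1)])
  clear_value c x v
  have hMn : (numEdges n : ℝ) ≤ n ^ 2 / 2 := by rw [hM]; nlinarith
  have hxb : x ≤ c * (3 * n / w ^ 2) := by
    have ht1pos : (0 : ℝ) < t1 := lt_of_lt_of_le (by positivity) ht0
    have e1 : t1 * (N * x - c * t1) ≤ n ^ 2 / 2 * (n * c) := by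
      have : (numEdges n : ℝ) * (n * c) ≤ n ^ 2 / 2 * (n * c) := by gcongr
      have : (0 : ℝ) ≤ numEdges n * x := by positivity
      linarith
    have e2 : N * x - c * t1 ≤ n ^ 2 * c / w ^ 5 := by
      by_cases hneg : N * x - c * t1 ≤ 0
      · exact hneg.trans (by positivity)
      · push Not at hneg
        have : (w ^ 5 * n / 2) * (N * x - c * t1) ≤ n ^ 2 / 2 * (n * c) :=
          (mul_le_mul_of_nonneg_right ht0 hneg.le).trans e1
        rw [le_div_iff₀ (by positivity)]
        have h' : n * ((N * x - c * t1) * w ^ 5) ≤ n * (n ^ 2 * c) := by linarith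
        exact le_of_mul_le_mul_left h' hn0
    have e3 : n * x ≤ 2.2 * w ^ 3 * (n ^ 2 * c / w ^ 5 + c * (w ^ 5 * n)) := by
      calc n * x ≤ (2.2 * w ^ 3 * N) * x := by gcongr
        _ = 2.2 * w ^ 3 * (N * x) := by ring
        _ ≤ _ := by
          have : c * t1 ≤ c * (w ^ 5 * n) := by gcongr
          gcongr
          linarith
    have e4 : 2.2 * w ^ 3 * (n ^ 2 * c / w ^ 5 + c * (w ^ 5 * n)) = n * (c * ((2.2 * n + 2.2 * w ^ 10) / w ^ 2)) := by
      field_simp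
    rw [e4] at e3
    have e5 := le_of_mul_le_mul_left e3 hn0
    refine e5.trans ?_
    have := hpow 10 (by norm_num)
    gcongr
    linarith
  have hvb : v ≤ c * (2 * n) := by
    rw [Finset.sum_sub_distrib, ← hv] at bV
    have hY : ∑ σ : EdgeOrdering n, Yv (pathsAfter N σ t1) ≤ c * n := by
      calc _ ≤ ∑ σ : EdgeOrdering n, (n : ℝ) := Finset.sum_le_sum (fun σ _ => Yv_le (pinv_pathsAfter N σ t1))
        _ = _ := by rw [Finset.sum_const, nsmul_eq_mul, Finset.card_univ, hcdef]
    have e1 : (2 * (n : ℝ) + 1) / N + 1 ≤ 8.8 * w ^ 3 := by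
      have : (2 * (n : ℝ) + 1) / N + 1 = (2 * n + 1 + N) / N := by field_simp
      rw [this, div_le_iff₀ hNr]
      have : (N : ℝ) ≤ n := by exact_mod_cast hN
      linarith
    have hMpos : 0 < (numEdges n : ℝ) - t1 := lt_of_lt_of_le (by positivity) hMt
    have e2 : (t1 : ℝ) * (c * (t1 * ((2 * n + 1) / N + 1) / (numEdges n - t1))) ≤ c * n := by
      calc (t1 : ℝ) * (c * (t1 * ((2 * n + 1) / N + 1) / (numEdges n - t1)))
          ≤ (w ^ 5 * n) * (c * ((w ^ 5 * n) * (8.8 * w ^ 3) / (n ^ 2 / 4))) := by gcongr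
        _ = c * (35.2 * w ^ 13) := by field_simp; ring
        _ ≤ c * n := by
            gcongr
            have := hpow 14 (by norm_num)
            have e : w ^ 14 = w * w ^ 13 := by ring
            have : 0 < w ^ 13 := by positivity
            nlinarith
    linarith
  have hVnn : ∀ σ : EdgeOrdering n, 0 ≤ Sv (pathsAfter N σ t1) - Yv (pathsAfter N σ t1) ^ 2 / N := by
    intro σ
    rw [← V_eq hN hN0 (pinv_pathsAfter N σ t1)]
    exact Finset.sum_nonneg (fun _ _ => sq_nonneg _)
  have hXnn : ∀ σ : EdgeOrdering n, 0 ≤ (n : ℝ) - Yv (pathsAfter N σ t1) := by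
    intro σ
    linarith [Yv_le (pinv_pathsAfter N σ t1)]
  refine le_trans ?_ (markov _ (fun σ : EdgeOrdering n =>
    ((n : ℝ) - Yv (pathsAfter N σ t1)) * (8 * w / n) +
    (Sv (pathsAfter N σ t1) - Yv (pathsAfter N σ t1) ^ 2 / N) * (1 / (w * n))) ?_ ?_)
  · rw [Finset.sum_add_distrib, ← Finset.sum_mul, ← Finset.sum_mul, ← hx, ← hv, ← hcdef]
    apply sub_le_sub_left
    rw [div_le_iff₀ hc]
    calc x * (8 * w / n) + v * (1 / (w * n)) ≤ (c * (3 * n / w ^ 2)) * (8 * w / n) + (c * (2 * n)) * (1 / (w * n)) := by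
          gcongr
      _ = 26 / w * c := by field_simp; ring
  · intro σ
    have := hVnn σ
    have := hXnn σ
    positivity
  · intro σ hσ
    by_contra hcon
    push Not at hcon
    apply hσ
    have ha : 0 ≤ ((n : ℝ) - Yv (pathsAfter N σ t1)) * (8 * w / n) := mul_nonneg (hXnn σ) (by positivity)
    have hb : 0 ≤ (Sv (pathsAfter N σ t1) - Yv (pathsAfter N σ t1) ^ 2 / N) * (1 / (w * n)) :=
      mul_nonneg (hVnn σ) (by positivity)
    apply determ hN hN0 (pinv_pathsAfter N σ t1) w hw h1 h2
    · have : ((n : ℝ) - Yv (pathsAfter N σ t1)) * (8 * w / n) ≤ 1 := by linarith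
      rw [← mul_div_assoc, div_le_one hn0] at this
      exact this
    · have : (Sv (pathsAfter N σ t1) - Yv (pathsAfter N σ t1) ^ 2 / N) * (1 / (w * n)) ≤ 1 := by linarith
      rw [mul_one_div, div_le_one (by positivity)] at this
      exact this

lemma omega_pow (ω : ℕ → ℝ) (hω : Tendsto ω atTop atTop)
    (hω' : Tendsto (fun n : ℕ => Real.log (ω n) / Real.log (Real.log n)) atTop (nhds 0)) :
    ∀ᶠ n : ℕ in atTop, ω n ^ 20 ≤ n := by
  have hlog : Tendsto (fun n : ℕ => Real.log (n : ℝ)) atTop atTop :=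
    Real.tendsto_log_atTop.comp tendsto_natCast_atTop_atTop
  have hll : Tendsto (fun n : ℕ => Real.log (Real.log (n : ℝ))) atTop atTop :=
    Real.tendsto_log_atTop.comp hlog
  have h1 := hω'.eventually (gt_mem_nhds (show (0 : ℝ) < 1 by norm_num))
  have hlo : ∀ᶠ x : ℝ in atTop, Real.log x ^ 20 ≤ x := by
    have := (Real.isLittleO_pow_log_id_atTop (n := 20)).bound (show (0 : ℝ) < 1 by norm_num)
    filter_upwards [this, eventually_gt_atTop 0] with x hx hx0
    simp only [id, Real.norm_eq_abs, one_mul, abs_of_pos hx0] at hx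
    exact (le_abs_self _).trans hx
  have h2 := tendsto_natCast_atTop_atTop (R := ℝ) |>.eventually hlo
  filter_upwards [h1, h2, hω.eventually_gt_atTop 0, hlog.eventually_gt_atTop 0, hll.eventually_gt_atTop 0]
    with n a b hp hl hll
  rw [div_lt_one hll] at a
  have : ω n < Real.log n := (Real.log_lt_log_iff hp hl).1 a
  exact le_trans (by gcongr) b

/-- with `N = ⌊ω⁻³·n/2⌋` and `t₁ = ⌊ω⁵·n⌋`, a.a.s. after round `t₁` the `N`
paths built by the greedy procedure together contain at least `(1 − ω⁻¹)·n` vertices, and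
at least `(1 − 2ω⁻¹)·n` of these vertices lie in paths containing between `ω³` and `3ω³`
vertices. -/
theorem statement14 (ω : ℕ → ℝ) (hω : Tendsto ω atTop atTop)
    (hω' : Tendsto (fun n : ℕ => Real.log (ω n) / Real.log (Real.log n)) atTop (nhds 0)) :
    Tendsto (fun n =>
        Pr (fun σ : EdgeOrdering n =>
          (1 - (ω n)⁻¹) * n ≤
            ((Finset.univ.filter (fun v : Fin n =>
              ∃ j, v ∈ pathsAfter ⌊(ω n)⁻¹ ^ 3 * n / 2⌋₊ σ ⌊ω n ^ 5 * n⌋₊ j)).card : ℝ) ∧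
          (1 - 2 * (ω n)⁻¹) * n ≤
            ((Finset.univ.filter (fun v : Fin n =>
              ∃ j, v ∈ pathsAfter ⌊(ω n)⁻¹ ^ 3 * n / 2⌋₊ σ ⌊ω n ^ 5 * n⌋₊ j ∧
                ω n ^ 3 ≤ ((pathsAfter ⌊(ω n)⁻¹ ^ 3 * n / 2⌋₊ σ ⌊ω n ^ 5 * n⌋₊ j).length : ℝ) ∧
                ((pathsAfter ⌊(ω n)⁻¹ ^ 3 * n / 2⌋₊ σ ⌊ω n ^ 5 * n⌋₊ j).length : ℝ)
                  ≤ 3 * ω n ^ 3)).card : ℝ)))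
      atTop (nhds 1) := by
  have hlim : Tendsto (fun n => 1 - 26 / ω n) atTop (nhds 1) := by
    have : Tendsto (fun n => 26 / ω n) atTop (nhds 0) := hω.const_div_atTop 26
    simpa using this.const_sub 1
  refine tendsto_of_tendsto_of_tendsto_of_le_of_le' hlim tendsto_const_nhds ?_
    (Eventually.of_forall (fun n => Pr_le_one _))
  filter_upwards [omega_pow ω hω hω', hω.eventually_ge_atTop 12] with n hn hw
  have hw0 : 0 < ω n := by linarith
  exact main_bound (ω n) hw hn (Nat.floor_le (by positivity)) (Nat.lt_floor_add_one _)
    (Nat.floor_le (by positivity)) (Nat.lt_floor_add_one _)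

end
end
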